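/- arXiv:2107.14353 — 3 statements merged into one kernel-verified Lean document; each statement's English description precedes it below -/
import Mathlib

section
/- Let K = ℂ(y), let J := PGL₂(K) ⋊ Aut_ℂ(K) where Aut_ℂ(K) acts on PGL₂(K) entrywise, let f ∈ K be a nonsquare element, let λ ∈ Kˣ, and let σ ∈ Aut_ℂ(K). Then λ²·σ(f) is again a nonsquare element of K, and the conjugate of the subgroup T_f ⊆ PGL₂(K) ⊆ J by the element (p(diag(λ,1)), σ) ∈ J equals T_{λ²·σ(f)}. -/
/-!
Conjugation by `(p(D), σ)`, `D = diag(λ, 1)`, sends `p(M) ∈ PGL₂(K)` to `p(D · σ(M) · D⁻¹)`, where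
`σ(M)` is `M` with `σ` applied entrywise (`conj_inl`). At the level of matrices
`D · σ((a, b·f; b, a)) · D⁻¹ = (σ(a), c·λ²σ(f); c, σ(a))` with `c = λ⁻¹σ(b)`, and `D · σ(·) · D⁻¹` is
a bijection of `GL₂(K)` under which `(a, b) ↦ (σ(a), λ⁻¹σ(b))` is a bijection of parameters
preserving `(a, b) ≠ (0, 0)` (`conj_torus_iff`), so `T_f` is carried onto `T_{λ²σ(f)}`.
If `λ²σ(f) = r²`, then `f = σ⁻¹(r/λ)²`, so nonsquares are preserved (`not_isSquare_twist`).
-/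


open Matrix Polynomial

noncomputable section

/-- K = ℂ(y), the field of rational functions in one variable over ℂ -/
abbrev K := RatFunc ℂ

/-- the general linear group GL₂(ℂ(y)) -/
abbrev GL2K := Matrix.GeneralLinearGroup (Fin 2) K

/-- the projective general linear group PGL₂(ℂ(y)) = GL₂(ℂ(y))/centre -/
abbrev PGL2K := GL2K ⧸ Subgroup.center GL2K

/-- the canonical projection p : GL₂(ℂ(y)) → PGL₂(ℂ(y)) -/
def pglK : GL2K →* PGL2K := QuotientGroup.mk' _

/-- the subset T_f of PGL₂(ℂ(y)): classes of ((a, b·f), (b, a)) with (a,b) ≠ (0,0) -/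
def Tset (f : K) : Set PGL2K :=
  { x | ∃ (M : GL2K) (a b : K), ¬(a = 0 ∧ b = 0) ∧
      (M : Matrix (Fin 2) (Fin 2) K) = !![a, b * f; b, a] ∧ x = pglK M }

/-- the entrywise action of a ℂ-algebra automorphism of K on GL₂(K) -/
def glAut (σ : K ≃ₐ[ℂ] K) : GL2K ≃* GL2K :=
  Units.mapEquiv (RingEquiv.mapMatrix σ.toRingEquiv).toMulEquiv

lemma map_center {G H : Type*} [Group G] [Group H] (e : G ≃* H) :
    (Subgroup.center G).map e.toMonoidHom = Subgroup.center H := by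
  ext h
  simp only [Subgroup.mem_map, Subgroup.mem_center_iff]
  constructor
  · rintro ⟨g, hg, rfl⟩ k
    have h1 : e.symm k * g = g * e.symm k := hg (e.symm k)
    have := congrArg e h1
    simpa [_root_.map_mul] using this
  · intro hh
    refine ⟨e.symm h, fun g => e.injective ?_, by simp⟩
    have := hh (e g)
    simpa [_root_.map_mul] using this

/-- the induced automorphism of PGL₂(K) -/
def pglAut (σ : K ≃ₐ[ℂ] K) : PGL2K ≃* PGL2K :=
  QuotientGroup.congr _ _ (glAut σ) (map_center (glAut σ))

/-- the entrywise action of Aut_ℂ(K) on PGL₂(K), as a group homomorphism -/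
def JAct : (K ≃ₐ[ℂ] K) →* MulAut PGL2K where
  toFun := pglAut
  map_one' := by
    ext x
    induction x using QuotientGroup.induction_on with
    | H g => rfl
  map_mul' σ τ := by
    ext x
    induction x using QuotientGroup.induction_on with
    | H g => rfl

/-- the Jonquières group J = PGL₂(ℂ(y)) ⋊ Aut_ℂ(ℂ(y)), with the entrywise action -/
abbrev J := SemidirectProduct PGL2K (K ≃ₐ[ℂ] K) JAct

lemma glAut_apply (σ : K ≃ₐ[ℂ] K) (M : GL2K) (i j : Fin 2) :
    (glAut σ M : Matrix (Fin 2) (Fin 2) K) i j = σ ((M : Matrix (Fin 2) (Fin 2) K) i j) := rfl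

lemma not_isSquare_twist {f : K} (hf : ¬ IsSquare f) (lam : Kˣ) (σ : K ≃ₐ[ℂ] K) :
    ¬ IsSquare ((lam : K) ^ 2 * σ f) := by
  rintro ⟨r, hr⟩
  have hl : (lam : K) ≠ 0 := lam.ne_zero
  refine hf ⟨σ.symm (r / lam), σ.injective ?_⟩
  rw [_root_.map_mul, AlgEquiv.apply_symm_apply]
  field_simp
  linear_combination hr

/-- In the Jonquières group, the element `(p(D), σ)` conjugates `p(M)` to `p(D · σ(M) · D⁻¹)`. -/
lemma conj_inl (D M : GL2K) (σ : K ≃ₐ[ℂ] K) :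
    (⟨pglK D, σ⟩ : J) * SemidirectProduct.inl (pglK M) * (⟨pglK D, σ⟩ : J)⁻¹
      = SemidirectProduct.inl (pglK (D * glAut σ M * D⁻¹)) := by
  have h : JAct σ (pglK M) = pglK (glAut σ M) := rfl
  rw [mul_inv_eq_iff_eq_mul]
  ext
  · simp [h]
  · simp

/-- Conjugation by `diag(λ, 1)` after `σ` matches the matrix with parameters `(a, b)` for `f` to
the matrix with parameters `(σ(a), λ⁻¹σ(b))` for `λ²σ(f)`. -/
lemma conj_torus_iff {f : K} (lam : Kˣ) (σ : K ≃ₐ[ℂ] K) {D : GL2K}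
    (hD : (D : Matrix (Fin 2) (Fin 2) K) = !![(lam : K), 0; 0, 1]) (M : GL2K) (a b : K) :
    (M : Matrix (Fin 2) (Fin 2) K) = !![a, b * f; b, a] ↔
    ((D * glAut σ M * D⁻¹ : GL2K) : Matrix (Fin 2) (Fin 2) K) =
      !![σ a, ((lam : K)⁻¹ * σ b) * ((lam : K) ^ 2 * σ f); (lam : K)⁻¹ * σ b, σ a] := by
  have hl : (lam : K) ≠ 0 := lam.ne_zero
  set N : GL2K := D * glAut σ M * D⁻¹ with hN
  have h : N * D = D * glAut σ M := by rw [hN, inv_mul_cancel_right]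
  have h' : (N : Matrix (Fin 2) (Fin 2) K) * (D : Matrix (Fin 2) (Fin 2) K)
      = (D : Matrix (Fin 2) (Fin 2) K) * (glAut σ M : Matrix (Fin 2) (Fin 2) K) :=
    congrArg Units.val h
  -- The four entries of `N · D = D · σ(M)` give `N` in terms of the entries of `M`.
  have h00 := congrFun (congrFun h' 0) 0
  have h01 := congrFun (congrFun h' 0) 1
  have h10 := congrFun (congrFun h' 1) 0
  have h11 := congrFun (congrFun h' 1) 1
  simp only [hD, Matrix.mul_apply, Fin.sum_univ_two, glAut_apply, of_apply, cons_val', cons_val_zero,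
    cons_val_one, cons_val_fin_one, mul_zero, zero_mul, add_zero, zero_add, mul_one,
    one_mul] at h00 h01 h10 h11
  rw [mul_comm, mul_right_inj' hl] at h00
  rw [mul_comm, ← eq_inv_mul_iff_mul_eq₀ hl] at h10
  have e : ((lam : K)⁻¹ * σ b) * ((lam : K) ^ 2 * σ f) = lam * σ (b * f) := by
    rw [_root_.map_mul]
    field_simp
  rw [e, ← Matrix.ext_iff, ← Matrix.ext_iff]
  simp [Fin.forall_fin_two, h00, h01, h10, h11, -_root_.map_mul, -mul_eq_mul_left_iff, hl]

/-- Let `f ∈ ℂ(y)` be a nonsquare, `λ ∈ ℂ(y)ˣ` and `σ ∈ Aut_ℂ(ℂ(y))`. Then `λ²·σ(f)` is again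
a nonsquare, and the conjugate of `T_f ⊆ PGL₂(K) ⊆ J` by the element `(p(diag(λ,1)), σ) ∈ J`
equals `T_{λ²·σ(f)}`. -/
theorem stmt12 (f : K) (hf : ¬ IsSquare f) (lam : Kˣ) (σ : K ≃ₐ[ℂ] K)
    (dl : PGL2K)
    (hdl : ∃ M : GL2K, (M : Matrix (Fin 2) (Fin 2) K) = !![(lam : K), 0; 0, 1] ∧ dl = pglK M) :
    ¬ IsSquare ((lam : K) ^ 2 * σ f) ∧
    (fun x => (⟨dl, σ⟩ : J) * x * (⟨dl, σ⟩ : J)⁻¹) '' (SemidirectProduct.inl '' Tset f)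
      = SemidirectProduct.inl '' Tset ((lam : K) ^ 2 * σ f) := by
  obtain ⟨D, hD, rfl⟩ := hdl
  have hl : (lam : K) ≠ 0 := lam.ne_zero
  refine ⟨not_isSquare_twist hf lam σ, ?_⟩
  ext x
  constructor
  · rintro ⟨_, ⟨_, ⟨M, a, b, hab, hM, rfl⟩, rfl⟩, rfl⟩
    refine ⟨_, ⟨D * glAut σ M * D⁻¹, σ a, (lam : K)⁻¹ * σ b, ?_,
      (conj_torus_iff lam σ hD M a b).1 hM, rfl⟩, (conj_inl D M σ).symm⟩
    simpa [hl] using hab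
  · rintro ⟨_, ⟨N, a, b, hab, hN, rfl⟩, rfl⟩
    -- The preimage of `N` has parameters `(σ⁻¹(a), σ⁻¹(λb))`.
    have hM : D * glAut σ ((glAut σ).symm (D⁻¹ * N * D)) * D⁻¹ = N := by
      rw [MulEquiv.apply_symm_apply]
      group
    refine ⟨_, ⟨_, ⟨(glAut σ).symm (D⁻¹ * N * D), σ.symm a, σ.symm (lam * b), ?_,
      (conj_torus_iff lam σ hD _ _ _).2 ?_, rfl⟩, rfl⟩, ?_⟩
    · simpa [hl] using hab
    · rw [hM, hN]
      simp only [AlgEquiv.apply_symm_apply, inv_mul_cancel_left₀ hl]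
    · beta_reduce
      rw [conj_inl, hM]

end
end

section
/- Let K = ℂ(y), let J := PGL₂(K) ⋊ Aut_ℂ(K), and let f, g ∈ K be nonsquare elements. Then the following are equivalent: (1) the subgroups T_f and T_g (both viewed inside the PGL₂(K)-factor of J) are conjugate in J; (2) there exist λ ∈ Kˣ and σ ∈ Aut_ℂ(K) with g = λ²·σ(f); (3) the fields K[X]/(X²−f) and K[X]/(X²−g) are isomorphic as ℂ-algebras. -/
/-!
Write `f ~ g` (`SimEq f g`) for condition (2). It is an equivalence relation, and the theorem
reduces to comparing it with (1) and with (3).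

Condition (2) gives (1) by conjugating with `diag(λ, 1)` and `σ` (`conj_of_simEq`). Conversely
`T_f` contains the class of `N = ((0, f), (1, 0))`; its conjugate is represented by a matrix
`((a, b g), (b, a))`, whose trace vanishes because that of `N` does, so `a = 0`, and comparing
determinants gives `b² g = c² σ(f)` (`simEq_of_conj`).

Condition (2) gives (3) by extending `σ` to the quadratic extensions (`algEquiv_of_simEq`). The
substance is (3) ⇒ (2), which does not assume that an isomorphism `e` respects the subfield `K`.
Let `L` be the common field, `i, j : K → L` the two embeddings, each making `L` quadratic over `K`,
and `z = i(y)`, `x = j(y)`.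

* If `x ∈ i(K)` or `z ∈ j(K)`, the two copies of `K` in `L` coincide, which gives an automorphism
  `σ`, and `σ(f)` and `g` generate the same quadratic extension, hence agree modulo squares
  (`simEq_of_eq`).
* Otherwise `x` is quadratic over `ℂ(z)` and `z` is quadratic over `ℂ(x)`, so `x` and `z` satisfy a
  relation `F(z, x) = 0` of degree at most two in each variable (`exists_biquadratic`). Modulo
  squares, `g` is the discriminant of `F` in `x` and `f` is the discriminant of `F` in `z`
  (`disc_of_relation`). Both are quartics, and by a classical identity they have the same invariants
  `I` and `J`. Every nonsquare quartic is `~` to the cubic `y³ - (I/3) y - J/27`, as one sees by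
  sending a simple root to infinity (`simEq_normal`), so `f ~ g` (`simEq_of_ne`).

The second case is a form of the statement that the double covering `L → ℙ¹` is unique up to
automorphisms, and the argument treats genus zero and one simultaneously; in higher genus it does
not occur.
-/

open Matrix Polynomial

noncomputable section

/-! ### Automorphisms of `ℂ(y)` and equivalence modulo squares -/

/-- `g` is obtained from `f` by an automorphism of `ℂ(y)`, up to a nonzero square factor. -/
def SimEq (f g : K) : Prop := ∃ (lam : Kˣ) (σ : K ≃ₐ[ℂ] K), g = (lam : K) ^ 2 * σ f

lemma SimEq.symm {f g : K} (h : SimEq f g) : SimEq g f := by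
  obtain ⟨lam, σ, rfl⟩ := h
  refine ⟨Units.map (σ.symm : K →* K) lam⁻¹, σ.symm, ?_⟩
  have h : σ.symm (lam : K) ≠ 0 := by simp
  simp only [Units.coe_map, MonoidHom.coe_coe, Units.val_inv_eq_inv_val, map_inv₀, _root_.map_mul,
    map_pow, AlgEquiv.symm_apply_apply]
  field_simp

lemma SimEq.trans {f g h : K} (h₁ : SimEq f g) (h₂ : SimEq g h) : SimEq f h := by
  obtain ⟨lam, σ, rfl⟩ := h₁
  obtain ⟨mu, τ, rfl⟩ := h₂
  refine ⟨mu * Units.map (τ : K →* K) lam, σ.trans τ, ?_⟩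
  simp
  ring

lemma SimEq.of_sq_mul {f q : K} (hq : q ≠ 0) : SimEq f (q ^ 2 * f) :=
  ⟨Units.mk0 q hq, AlgEquiv.refl, by simp⟩

lemma SimEq.of_aut {f q : K} (hq : q ≠ 0) (σ : K ≃ₐ[ℂ] K) : SimEq f (q ^ 2 * σ f) :=
  ⟨Units.mk0 q hq, σ, by simp⟩

lemma ratFunc_algHom_ext {L : Type*} [Field L] [Algebra ℂ L] {i j : K →ₐ[ℂ] L}
    (h : i RatFunc.X = j RatFunc.X) : i = j := by
  have h1 : i.comp (Algebra.algHom ℂ ℂ[X] K) = j.comp (Algebra.algHom ℂ ℂ[X] K) := by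
    apply Polynomial.algHom_ext
    change i (algebraMap ℂ[X] K X) = j (algebraMap ℂ[X] K X)
    rw [RatFunc.algebraMap_X, h]
  ext x
  rw [← RatFunc.num_div_denom x, map_div₀, map_div₀]
  have h2 (p : ℂ[X]) : i (algebraMap ℂ[X] K p) = j (algebraMap ℂ[X] K p) := congr($h1 p)
  rw [h2, h2]

/-- The substitution `y ↦ h`, for nonconstant `h`. -/
lemma exists_subst (h : K) (hh : Transcendental ℂ h) : ∃ i : K →ₐ[ℂ] K, i RatFunc.X = h := by
  have hinj : Function.Injective (aeval h : ℂ[X] →ₐ[ℂ] K) := transcendental_iff_injective.1 hh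
  refine ⟨RatFunc.liftAlgHom (aeval h)
    (nonZeroDivisors_le_comap_nonZeroDivisors_of_injective _ hinj), ?_⟩
  rw [RatFunc.liftAlgHom_apply]
  simp

/-- The substitutions `y ↦ h` and `y ↦ k` are mutually inverse automorphisms as soon as they are
inverse to each other on `y`. -/
lemma exists_aut (h k : K) (hh : Transcendental ℂ h) (hk : Transcendental ℂ k)
    (h1 : ∀ i : K →ₐ[ℂ] K, i RatFunc.X = h → i k = RatFunc.X)
    (h2 : ∀ i : K →ₐ[ℂ] K, i RatFunc.X = k → i h = RatFunc.X) :
    ∃ σ : K ≃ₐ[ℂ] K, σ RatFunc.X = h := by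
  obtain ⟨i, hi⟩ := exists_subst h hh
  obtain ⟨j, hj⟩ := exists_subst k hk
  refine ⟨AlgEquiv.ofAlgHom i j ?_ ?_, hi⟩ <;> apply ratFunc_algHom_ext
  · simp [hj, h1 i hi]
  · simp [hi, h2 j hj]

lemma transcendental_ratX : Transcendental ℂ (RatFunc.X : K) := RatFunc.transcendental_X

lemma transcendental_affine (α β : ℂ) (hα : α ≠ 0) :
    Transcendental ℂ (algebraMap ℂ K α * RatFunc.X + algebraMap ℂ K β) := by
  intro h
  apply transcendental_ratX
  have hα' : algebraMap ℂ K α ≠ 0 := by simpa using hα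
  have : (RatFunc.X : K) = algebraMap ℂ K α⁻¹ * ((algebraMap ℂ K α * RatFunc.X + algebraMap ℂ K β)
    - algebraMap ℂ K β) := by rw [map_inv₀]; field_simp; ring
  rw [this]
  exact (isAlgebraic_algebraMap _).mul (h.sub (isAlgebraic_algebraMap _))

lemma exists_affine (α β : ℂ) (hα : α ≠ 0) : ∃ σ : K ≃ₐ[ℂ] K,
    σ RatFunc.X = algebraMap ℂ K α * RatFunc.X + algebraMap ℂ K β := by
  have hα' : algebraMap ℂ K α ≠ 0 := by simpa using hα
  refine exists_aut _ (algebraMap ℂ K α⁻¹ * RatFunc.X + algebraMap ℂ K (- β / α))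
    (transcendental_affine _ _ hα) (transcendental_affine _ _ (inv_ne_zero hα)) ?_ ?_
  · intro i hi
    simp only [map_add, _root_.map_mul, hi, AlgHom.commutes, map_div₀, map_inv₀, map_neg]
    field_simp; ring
  · intro i hi
    simp only [map_add, _root_.map_mul, hi, AlgHom.commutes, map_div₀, map_inv₀, map_neg]
    field_simp; ring

lemma exists_inversion (r : ℂ) : ∃ σ : K ≃ₐ[ℂ] K,
    σ RatFunc.X = algebraMap ℂ K r + (RatFunc.X : K)⁻¹ := by
  have ht : Transcendental ℂ (RatFunc.X : K)⁻¹ := fun h => transcendental_ratX (by simpa using h.inv)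
  obtain ⟨σ, hσ⟩ := exists_aut (RatFunc.X : K)⁻¹ (RatFunc.X : K)⁻¹ ht ht
    (fun i hi => by simp [hi]) (fun i hi => by simp [hi])
  obtain ⟨τ, hτ⟩ := exists_affine 1 r one_ne_zero
  refine ⟨τ.trans σ, ?_⟩
  rw [AlgEquiv.trans_apply, hτ]
  simp only [map_add, _root_.map_mul, AlgEquiv.commutes, map_one, hσ]
  ring

/-! ### Quartics and their invariants -/

/-- The polynomial `a y⁴ + b y³ + c y² + d y + e` as an element of `ℂ(y)`. The leading coefficients
may vanish: a quartic is thought of as a binary form of degree four, with roots in `ℙ¹`. -/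
def quart (a b c d e : ℂ) : K :=
  algebraMap ℂ K a * RatFunc.X ^ 4 + algebraMap ℂ K b * RatFunc.X ^ 3
    + algebraMap ℂ K c * RatFunc.X ^ 2 + algebraMap ℂ K d * RatFunc.X + algebraMap ℂ K e

/-- The invariant `I`, of degree two, of a binary quartic form. -/
def invI (a b c d e : ℂ) : ℂ := 12 * a * e - 3 * b * d + c ^ 2

/-- The invariant `J`, of degree three, of a binary quartic form. -/
def invJ (a b c d e : ℂ) : ℂ :=
  72 * a * c * e + 9 * b * c * d - 27 * a * d ^ 2 - 27 * e * b ^ 2 - 2 * c ^ 3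

/-- The normal form of a quartic with a simple root at infinity, reached by an affine substitution
that makes the cubic monic, up to a square, and removes its term of degree two. -/
lemma simEq_cubic (b c d e : ℂ) (hb : b ≠ 0) :
    SimEq (quart 0 b c d e) (quart 0 1 0 (-invI 0 b c d e / 3) (-invJ 0 b c d e / 27)) := by
  obtain ⟨σ, hσ⟩ := exists_affine b⁻¹ (-c / (3 * b)) (inv_ne_zero hb)
  have hb' : algebraMap ℂ K b ≠ 0 := by simpa using hb
  have := SimEq.of_aut (f := quart 0 b c d e) hb' σ
  convert this using 1
  simp only [quart, invI, invJ, map_add, _root_.map_mul, map_pow, hσ, AlgEquiv.commutes, map_div₀,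
    map_inv₀, map_neg, map_sub, map_zero, map_one, map_ofNat]
  field_simp
  ring

/-- A finite simple root `r` is sent to infinity by `y ↦ r + 1/y`, which reduces to `simEq_cubic`. -/
lemma simEq_of_simple_root (a b c d e r : ℂ)
    (h0 : a * r ^ 4 + b * r ^ 3 + c * r ^ 2 + d * r + e = 0)
    (h1 : 4 * a * r ^ 3 + 3 * b * r ^ 2 + 2 * c * r + d ≠ 0) :
    SimEq (quart a b c d e) (quart 0 1 0 (-invI a b c d e / 3) (-invJ a b c d e / 27)) := by
  obtain ⟨σ, hσ⟩ := exists_inversion r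
  have hX : (RatFunc.X : K) ≠ 0 := RatFunc.X_ne_zero
  have h := SimEq.of_aut (f := quart a b c d e) (pow_ne_zero 2 hX) σ
  have he : e = -(a * r ^ 4 + b * r ^ 3 + c * r ^ 2 + d * r) := by linear_combination h0
  have h' := simEq_cubic _ (6 * a * r ^ 2 + 3 * b * r + c) (4 * a * r + b) a h1
  -- The coefficients on the right are the Taylor coefficients of the quartic at `r`.
  have key : (RatFunc.X ^ 2) ^ 2 * σ (quart a b c d e) =
      quart 0 (4 * a * r ^ 3 + 3 * b * r ^ 2 + 2 * c * r + d)
        (6 * a * r ^ 2 + 3 * b * r + c) (4 * a * r + b) a := by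
    subst he
    simp only [quart, map_add, _root_.map_mul, map_pow, hσ, AlgEquiv.commutes,
      map_neg, map_zero, map_ofNat]
    field_simp
    ring
  rw [key] at h
  -- Substitutions of determinant `±1` preserve `I` and `J`.
  convert h.trans h' using 3
  · subst he; simp only [invI]; ring
  · subst he; simp only [invJ]; ring

lemma exists_quadratic_roots (a b c : ℂ) (ha : a ≠ 0) :
    ∃ s t : ℂ, b = -a * (s + t) ∧ c = a * (s * t) := by
  obtain ⟨w, hw⟩ := IsAlgClosed.exists_pow_nat_eq (b ^ 2 - 4 * a * c) (n := 2) (by norm_num)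
  refine ⟨(-b + w) / (2 * a), (-b - w) / (2 * a), ?_, ?_⟩
  · field_simp; ring
  · field_simp; linear_combination hw

lemma exists_quartic_root (a b c d e : ℂ) (ha : a ≠ 0) :
    ∃ r, a * r ^ 4 + b * r ^ 3 + c * r ^ 2 + d * r + e = 0 := by
  have hd : (C a * X ^ 4 + C b * X ^ 3 + C c * X ^ 2 + C d * X + C e : ℂ[X]).degree = 4 := by
    compute_degree!
  obtain ⟨r, hr⟩ := IsAlgClosed.exists_root
    (C a * X ^ 4 + C b * X ^ 3 + C c * X ^ 2 + C d * X + C e : ℂ[X]) (by rw [hd]; norm_num)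
  exact ⟨r, by simpa using hr⟩

/-- The quartic `k (m y² + p y + q)²` is a square, `k` being a square in `ℂ`. -/
lemma isSquare_quart_of_sq (k p q : ℂ) (a b c d e : ℂ) (m : ℂ) (ha : a = k * m ^ 2)
    (hb : b = k * (2 * m * p)) (hc : c = k * (p ^ 2 + 2 * m * q)) (hd : d = k * (2 * p * q))
    (he : e = k * q ^ 2) : IsSquare (quart a b c d e) := by
  obtain ⟨w, rfl⟩ := IsAlgClosed.exists_pow_nat_eq k (n := 2) (by norm_num)
  subst ha hb hc hd he
  refine ⟨algebraMap ℂ K w * (algebraMap ℂ K m * RatFunc.X ^ 2 + algebraMap ℂ K p * RatFunc.X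
    + algebraMap ℂ K q), ?_⟩
  simp only [quart, map_add, _root_.map_mul, map_pow, map_ofNat]
  ring

/-- Modulo squares and automorphisms, a nonsquare quartic is determined by its invariants: it has a
simple root in `ℙ¹`, since all its roots being multiple would make it a square. -/
lemma simEq_normal (a b c d e : ℂ) (h : ¬ IsSquare (quart a b c d e)) :
    SimEq (quart a b c d e) (quart 0 1 0 (-invI a b c d e / 3) (-invJ a b c d e / 27)) := by
  by_cases ha : a = 0
  · subst ha
    by_cases hb : b = 0
    · subst hb
      by_cases hc : c = 0
      · subst hc
        by_cases hd : d = 0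
        · subst hd
          exact (h (isSquare_quart_of_sq e 0 1 _ _ _ _ _ 0 (by ring) (by ring) (by ring) (by ring)
            (by ring))).elim
        · exact simEq_of_simple_root _ _ _ _ _ (-e / d) (by field_simp; ring) (by simpa using hd)
      · obtain ⟨s, t, rfl, rfl⟩ := exists_quadratic_roots c d e hc
        by_cases hst : s = t
        · subst hst
          exact (h (isSquare_quart_of_sq c 1 (-s) _ _ _ _ _ 0 (by ring) (by ring) (by ring)
            (by ring) (by ring))).elim
        · refine simEq_of_simple_root _ _ _ _ _ s (by ring) ?_
          have : c * (s - t) ≠ 0 := mul_ne_zero hc (sub_ne_zero.2 hst)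
          convert this using 1; ring
    · exact simEq_cubic b c d e hb
  · obtain ⟨r, hr⟩ := exists_quartic_root a b c d e ha
    by_cases hder : 4 * a * r ^ 3 + 3 * b * r ^ 2 + 2 * c * r + d = 0
    swap
    · exact simEq_of_simple_root _ _ _ _ _ r hr hder
    -- Now `r` is a multiple root, and `s` and `t` are the roots of the quotient by `(y - r)²`.
    obtain ⟨s, t, h1, h2⟩ := exists_quadratic_roots a (b + 2 * a * r)
      (c + 2 * b * r + 3 * a * r ^ 2) ha
    obtain rfl : b = -a * (s + t + 2 * r) := by linear_combination h1
    obtain rfl : c = a * (s * t + 2 * r * (s + t) + r ^ 2) := by linear_combination h2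
    obtain rfl : d = -a * (2 * r * (s * t) + r ^ 2 * (s + t)) := by linear_combination hder
    obtain rfl : e = a * (r ^ 2 * s * t) := by linear_combination hr
    by_cases hst : s = t
    · subst hst
      exact (h (isSquare_quart_of_sq a (-(r + s)) (r * s) _ _ _ _ _ 1 (by ring) (by ring) (by ring)
            (by ring) (by ring))).elim
    have hst' : s - t ≠ 0 := sub_ne_zero.2 hst
    by_cases hsr : s = r
    · have htr : t - r ≠ 0 := fun h => hst (by linear_combination hsr - h)
      refine simEq_of_simple_root _ _ _ _ _ t (by ring) ?_
      have : -(a * (t - r) ^ 2 * (s - t)) ≠ 0 := by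
        simp [ha, htr, hst']
      convert this using 1; ring
    · have hsr' : s - r ≠ 0 := sub_ne_zero.2 hsr
      refine simEq_of_simple_root _ _ _ _ _ s (by ring) ?_
      have : a * (s - r) ^ 2 * (s - t) ≠ 0 := by
        simp [ha, hsr', hst']
      convert this using 1; ring

/-! ### Two quadratic presentations of the same field -/

section Quadratic

variable {L : Type*} [Field L] [Algebra ℂ L]

lemma transcendental_map (i : K →ₐ[ℂ] L) : Transcendental ℂ (i RatFunc.X) :=
  fun h => transcendental_ratX ((isAlgebraic_algHom_iff i i.injective).1 h)

/-- If `L = i(K)(v)` with `v² = g`, the discriminant of any quadratic relation over `K` satisfied by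
an element outside `K` equals `g` modulo squares. -/
lemma disc_of_relation (i : K →ₐ[ℂ] L) {g : K} {v w : L} (hv : v ^ 2 = i g)
    (hspan : ∀ l : L, ∃ a b : K, l = i a + i b * v) (hw : w ∉ Set.range i)
    {A B D : K} (hABD : ¬(A = 0 ∧ B = 0 ∧ D = 0))
    (h : i A * w ^ 2 + i B * w + i D = 0) :
    ∃ q : K, q ≠ 0 ∧ B ^ 2 - 4 * A * D = q ^ 2 * g := by
  obtain ⟨p, q, rfl⟩ := hspan w
  have hv' : v ∉ Set.range i := by
    rintro ⟨t, rfl⟩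
    exact hw ⟨p + q * t, by simp⟩
  have hq : q ≠ 0 := by
    rintro rfl
    exact hw ⟨p, by simp⟩
  have hlin : ∀ s t : K, i s + i t * v = 0 → s = 0 ∧ t = 0 := by
    intro s t hst
    by_cases ht : t = 0
    · subst ht
      simpa using hst
    · refine absurd ⟨-s / t, ?_⟩ hv'
      have : i t ≠ 0 := by simpa using ht
      rw [map_div₀, map_neg]
      field_simp
      linear_combination -hst
  obtain ⟨h1, h2⟩ := hlin (A * (p ^ 2 + q ^ 2 * g) + B * p + D) (q * (2 * A * p + B)) (by
    simp only [map_add, _root_.map_mul, map_pow, map_ofNat, ← hv]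
    linear_combination h)
  -- With `w = p + q v`, the vanishing of the coefficient of `v` says that `p` is half the sum of the
  -- two roots, and the discriminant is then `(2 A q)² g`.
  have h3 : 2 * A * p + B = 0 := (mul_eq_zero.1 h2).resolve_left hq
  have hA : A ≠ 0 := by
    rintro rfl
    have hB : B = 0 := by simpa using h3
    subst hB
    exact hABD ⟨rfl, rfl, by simpa using h1⟩
  refine ⟨2 * A * q, by simp [hA, hq], ?_⟩
  linear_combination (B + 2 * A * p) * h3 - 4 * A * h1

/-- The minimal polynomial over `K` of an element outside `K` of a quadratic extension. -/
lemma exists_monic_quadratic (i : K →ₐ[ℂ] L) {g : K} {v : L} (hv : v ^ 2 = i g)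
    (hspan : ∀ l : L, ∃ a b : K, l = i a + i b * v) {w : L} (hw : w ∉ Set.range i) :
    ∃ P : K[X], P.natDegree = 2 ∧ Irreducible P ∧ P.eval₂ (i : K →+* L) w = 0 := by
  obtain ⟨p, q, rfl⟩ := hspan w
  set P : K[X] := X ^ 2 - C (2 * p) * X + C (p ^ 2 - q ^ 2 * g) with hP
  have hdeg : P.natDegree = 2 := by rw [hP]; compute_degree!
  refine ⟨P, hdeg, ?_, ?_⟩
  · rw [Polynomial.irreducible_iff_roots_eq_zero_of_degree_le_three (by omega) (by omega)]
    rw [Multiset.eq_zero_iff_forall_notMem]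
    intro t ht
    have ht' : t ^ 2 - 2 * p * t + (p ^ 2 - q ^ 2 * g) = 0 := by
      simpa [hP] using (Polynomial.mem_roots'.1 ht).2
    have h1 := congrArg i ht'
    simp only [map_add, map_sub, _root_.map_mul, map_pow, map_ofNat, map_zero, ← hv] at h1
    have h2 : (i t - (i p + i q * v)) * (i t - (i p - i q * v)) = 0 := by
      linear_combination h1
    rcases mul_eq_zero.1 h2 with h3 | h3
    · exact hw ⟨t, by linear_combination h3⟩
    · exact hw ⟨2 * p - t, by simp only [map_sub, _root_.map_mul, map_ofNat]; linear_combination -h3⟩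
  · simp only [hP, eval₂_add, eval₂_sub, eval₂_mul, eval₂_pow, eval₂_X, eval₂_C, RingHom.coe_coe,
      eval₂_ofNat, map_sub, _root_.map_mul, map_pow, map_ofNat, ← hv]
    ring

/-- Clearing denominators: an irreducible polynomial over `ℂ(z)` is, up to a nonzero factor in
`ℂ(z)`, an irreducible polynomial in two variables (Gauss's lemma). -/
lemma exists_primitive_multiple (P : K[X]) (hP : Irreducible P) :
    ∃ F : ℂ[X][X], Irreducible F ∧ F.natDegree = P.natDegree ∧
      ∃ c : K, c ≠ 0 ∧ F.map (algebraMap ℂ[X] K) = C c * P := by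
  obtain ⟨s, hs, hs'⟩ := IsLocalization.integerNormalization_spec (nonZeroDivisors ℂ[X]) P
  set N := IsLocalization.integerNormalization (nonZeroDivisors ℂ[X]) P
  have hs0 : algebraMap ℂ[X] K s ≠ 0 := by
    simpa using nonZeroDivisors.ne_zero hs
  have hN : N ≠ 0 := by
    intro h
    rw [h, Polynomial.map_zero] at hs'
    have : C (algebraMap ℂ[X] K s) * P = 0 := by
      rw [← Polynomial.smul_eq_C_mul, algebraMap_smul, ← hs']
    simp [hs0, hP.ne_zero] at this
  have hc0 : algebraMap ℂ[X] K N.content ≠ 0 := by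
    simpa [Polynomial.content_eq_zero_iff] using hN
  have hmap : N.primPart.map (algebraMap ℂ[X] K) =
      C (algebraMap ℂ[X] K s / algebraMap ℂ[X] K N.content) * P := by
    have h1 := congrArg (Polynomial.map (algebraMap ℂ[X] K)) N.eq_C_content_mul_primPart
    rw [hs', Polynomial.map_mul, Polynomial.map_C, ← algebraMap_smul K s P,
      Polynomial.smul_eq_C_mul] at h1
    have h2 : (C (algebraMap ℂ[X] K N.content) : K[X]) ≠ 0 := by simpa using hc0
    apply mul_left_cancel₀ h2
    rw [← h1, ← mul_assoc, ← C_mul, mul_div_cancel₀ _ hc0]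
  have hc : algebraMap ℂ[X] K s / algebraMap ℂ[X] K N.content ≠ 0 := div_ne_zero hs0 hc0
  refine ⟨N.primPart, ?_, ?_, _, hc, hmap⟩
  · rw [N.isPrimitive_primPart.irreducible_iff_irreducible_map_fraction_map (K := K), hmap]
    exact (irreducible_isUnit_mul (isUnit_C.2 hc.isUnit)).2 hP
  · rw [← Polynomial.natDegree_map_eq_of_injective (RatFunc.algebraMap_injective ℂ), hmap,
      Polynomial.natDegree_C_mul hc]

/-- Evaluating a polynomial over `ℂ[y]` at `w` through `i` is evaluating the corresponding polynomial
in two variables at `(i(y), w)`. -/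
lemma eval₂_algHom (i : K →ₐ[ℂ] L) (F : ℂ[X][X]) (w : L) :
    (F.map (algebraMap ℂ[X] K)).eval₂ (i : K →+* L) w = F.aevalAeval (i RatFunc.X) w := by
  have h : (i : K →+* L).comp (algebraMap ℂ[X] K) =
      (aeval (i RatFunc.X) : ℂ[X] →ₐ[ℂ] L).toRingHom := by
    have h' : i.comp (Algebra.algHom ℂ ℂ[X] K) = aeval (i RatFunc.X) := by
      apply Polynomial.algHom_ext
      change i (algebraMap ℂ[X] K X) = _
      rw [RatFunc.algebraMap_X, aeval_X]
    exact congrArg AlgHom.toRingHom h'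
  rw [Polynomial.eval₂_map, h]
  induction F using Polynomial.induction_on' with
  | add p q hp hq => rw [eval₂_add, hp, hq, map_add]
  | monomial n a =>
    rw [← C_mul_X_pow_eq_monomial, eval₂_mul, eval₂_C, eval₂_X_pow, _root_.map_mul, map_pow,
      aevalAeval_C, aevalAeval_Y]
    rfl

/-- If neither of `i(y)` and `j(y)` lies in the other copy of `K`, they satisfy a relation of degree
at most two in each of them. The inner variable of `F` stands for `i(y)`, the outer one for `j(y)`. -/
lemma exists_biquadratic (i j : K →ₐ[ℂ] L) {f g : K} {u v : L} (hv : v ^ 2 = i g)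
    (hu : u ^ 2 = j f)
    (hi : ∀ l : L, ∃ a b : K, l = i a + i b * v) (hj : ∀ l : L, ∃ a b : K, l = j a + j b * u)
    (hx : j RatFunc.X ∉ Set.range i) (hz : i RatFunc.X ∉ Set.range j) :
    ∃ F : ℂ[X][X], F ≠ 0 ∧ F.natDegree ≤ 2 ∧ (∀ n, (F.coeff n).natDegree ≤ 2) ∧
      F.aevalAeval (i RatFunc.X) (j RatFunc.X) = 0 := by
  obtain ⟨P, hP2, hPi, hP0⟩ := exists_monic_quadratic i hv hi hx
  obtain ⟨Q, hQ2, hQi, hQ0⟩ := exists_monic_quadratic j hu hj hz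
  obtain ⟨F, hFi, hFd, c, hc, hF⟩ := exists_primitive_multiple P hPi
  have hF0 : F.aevalAeval (i RatFunc.X) (j RatFunc.X) = 0 := by
    rw [← eval₂_algHom, hF, eval₂_mul, hP0, mul_zero]
  -- With its variables exchanged, `F` is still irreducible, so by Gauss's lemma it divides the
  -- minimal polynomial `Q` of `i(y)` over `j(K)`; this bounds its degree in `i(y)`.
  set G := Polynomial.Bivariate.swap F with hG
  have hFG : F = Polynomial.Bivariate.swap G := (Polynomial.Bivariate.swap_swap_apply F).symm
  have hG0 : G.aevalAeval (j RatFunc.X) (i RatFunc.X) = 0 := by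
    rw [hG, Polynomial.Bivariate.aevalAeval_swap, hF0]
  have hGi : Irreducible G := (MulEquiv.irreducible_iff Polynomial.Bivariate.swap).2 hFi
  have hGd : G.natDegree ≠ 0 := by
    intro h
    rw [Polynomial.eq_C_of_natDegree_eq_zero h, Polynomial.aevalAeval_C] at hG0
    have := (transcendental_iff.1 (transcendental_map j)) _ hG0
    apply hGi.ne_zero
    rw [Polynomial.eq_C_of_natDegree_eq_zero h, this, C_0]
  have hGK : Irreducible (G.map (algebraMap ℂ[X] K)) :=
    ((hGi.isPrimitive hGd).irreducible_iff_irreducible_map_fraction_map).1 hGi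
  have hdvd : G.map (algebraMap ℂ[X] K) ∣ Q := by
    by_contra hnd
    obtain ⟨a, b, hab⟩ := hGK.coprime_iff_not_dvd.2 hnd
    have := congrArg (Polynomial.eval₂ (j : K →+* L) (i RatFunc.X)) hab
    rw [eval₂_add, eval₂_mul, eval₂_mul, eval₂_algHom, hG0, hQ0] at this
    simp at this
  have hG2 : G.natDegree ≤ 2 := by
    rw [← Polynomial.natDegree_map_eq_of_injective (RatFunc.algebraMap_injective ℂ), ← hQ2]
    exact Polynomial.natDegree_le_of_dvd hdvd hQi.ne_zero
  refine ⟨F, hFi.ne_zero, (hFd.trans hP2).le, fun n => ?_, hF0⟩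
  have hGe : G = C (G.coeff 2) * X ^ 2 + C (G.coeff 1) * X + C (G.coeff 0) := by
    conv_lhs => rw [G.as_sum_range_C_mul_X_pow' (n := 3) (by omega)]
    simp [Finset.sum_range_succ]
    ring
  have hFe : F = (G.coeff 2).map C * C (X ^ 2) + (G.coeff 1).map C * C X + (G.coeff 0).map C := by
    rw [hFG]
    conv_lhs => rw [hGe]
    simp only [map_add, _root_.map_mul, map_pow, Polynomial.Bivariate.swap_C,
      Polynomial.Bivariate.swap_Y]
  rw [hFe, coeff_add, coeff_add, coeff_mul_C, coeff_mul_C, coeff_map, coeff_map, coeff_map]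
  compute_degree

/-- The case where the two copies of `K` in `L` differ: `g` and `f` are, modulo squares, the two
discriminants of a biquadratic relation, and these are quartics with the same invariants. -/
lemma simEq_of_ne (i j : K →ₐ[ℂ] L) {f g : K} {u v : L} (hv : v ^ 2 = i g)
    (hu : u ^ 2 = j f) (hf : ¬ IsSquare f) (hg : ¬ IsSquare g)
    (hi : ∀ l : L, ∃ a b : K, l = i a + i b * v) (hj : ∀ l : L, ∃ a b : K, l = j a + j b * u)
    (hx : j RatFunc.X ∉ Set.range i) (hz : i RatFunc.X ∉ Set.range j) : SimEq f g := by
  obtain ⟨F, hF0, hF2, hFn, hF⟩ := exists_biquadratic i j hv hu hi hj hx hz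
  have quad {R : Type} [CommRing R] (p : R[X]) (hp : p.natDegree ≤ 2) :
      p = C (p.coeff 2) * X ^ 2 + C (p.coeff 1) * X + C (p.coeff 0) := by
    conv_lhs => rw [p.as_sum_range_C_mul_X_pow' (n := 3) (by omega)]
    simp [Finset.sum_range_succ]
    ring
  obtain ⟨a2, a1, a0, hA⟩ : ∃ a2 a1 a0, F.coeff 2 = C a2 * X ^ 2 + C a1 * X + C a0 :=
    ⟨_, _, _, quad _ (hFn 2)⟩
  obtain ⟨b2, b1, b0, hB⟩ : ∃ a2 a1 a0, F.coeff 1 = C a2 * X ^ 2 + C a1 * X + C a0 :=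
    ⟨_, _, _, quad _ (hFn 1)⟩
  obtain ⟨c2, c1, c0, hC⟩ : ∃ a2 a1 a0, F.coeff 0 = C a2 * X ^ 2 + C a1 * X + C a0 :=
    ⟨_, _, _, quad _ (hFn 0)⟩
  have hFe := quad F hF2
  rw [hA, hB, hC] at hFe
  -- `F` has coefficient matrix `((a2, a1, a0), (b2, b1, b0), (c2, c1, c0))`; its rows are read as
  -- coefficients in `ℂ[i(y)]`, its columns as coefficients in `ℂ[j(y)]`.
  let κ : ℂ → ℂ → ℂ → K := fun r s t =>
    algebraMap ℂ K r * RatFunc.X ^ 2 + algebraMap ℂ K s * RatFunc.X + algebraMap ℂ K t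
  have hκ : ∀ r s t, κ r s t = 0 → r = 0 ∧ s = 0 ∧ t = 0 := by
    intro r s t h
    have h1 : (C r * X ^ 2 + C s * X + C t : ℂ[X]) = 0 := by
      apply transcendental_iff.1 transcendental_ratX
      simpa [κ] using h
    refine ⟨?_, ?_, ?_⟩
    · simpa [coeff_X, coeff_C] using congrArg (fun p => p.coeff 2) h1
    · simpa [coeff_X, coeff_C] using congrArg (fun p => p.coeff 1) h1
    · simpa [coeff_X, coeff_C] using congrArg (fun p => p.coeff 0) h1
  rw [hFe] at hF
  simp only [map_add, _root_.map_mul, map_pow, aevalAeval_C, aevalAeval_Y, aeval_X, aeval_C] at hF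
  have hne : ¬(a2 = 0 ∧ a1 = 0 ∧ a0 = 0 ∧ b2 = 0 ∧ b1 = 0 ∧ b0 = 0 ∧ c2 = 0 ∧ c1 = 0 ∧ c0 = 0) := by
    rintro ⟨rfl, rfl, rfl, rfl, rfl, rfl, rfl, rfl, rfl⟩
    exact hF0 (by simpa using hFe)
  obtain ⟨q, hq, h1⟩ := disc_of_relation i hv hi hx (A := κ a2 a1 a0) (B := κ b2 b1 b0)
    (D := κ c2 c1 c0) (by
      rintro ⟨h1, h2, h3⟩
      obtain ⟨h11, h12, h13⟩ := hκ _ _ _ h1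
      obtain ⟨h21, h22, h23⟩ := hκ _ _ _ h2
      obtain ⟨h31, h32, h33⟩ := hκ _ _ _ h3
      exact hne ⟨h11, h12, h13, h21, h22, h23, h31, h32, h33⟩) (by
      simp only [κ, map_add, _root_.map_mul, map_pow, AlgHom.commutes]
      linear_combination hF)
  obtain ⟨q', hq', h2⟩ := disc_of_relation j hu hj hz (A := κ a2 b2 c2) (B := κ a1 b1 c1)
    (D := κ a0 b0 c0) (by
      rintro ⟨h1, h2, h3⟩
      obtain ⟨h11, h12, h13⟩ := hκ _ _ _ h1
      obtain ⟨h21, h22, h23⟩ := hκ _ _ _ h2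
      obtain ⟨h31, h32, h33⟩ := hκ _ _ _ h3
      exact hne ⟨h11, h21, h31, h12, h22, h32, h13, h23, h33⟩) (by
      simp only [κ, map_add, _root_.map_mul, map_pow, AlgHom.commutes]
      linear_combination hF)
  have nsq : ∀ {h r : K}, r ≠ 0 → ¬ IsSquare h → ¬ IsSquare (r ^ 2 * h) := by
    rintro h r hr hh ⟨t, ht⟩
    exact hh ⟨t / r, by field_simp; linear_combination ht⟩
  have e1 : κ b2 b1 b0 ^ 2 - 4 * κ a2 a1 a0 * κ c2 c1 c0 =
      quart (b2 ^ 2 - 4 * a2 * c2) (2 * b2 * b1 - 4 * (a2 * c1 + a1 * c2))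
        (b1 ^ 2 + 2 * b2 * b0 - 4 * (a2 * c0 + a1 * c1 + a0 * c2))
        (2 * b1 * b0 - 4 * (a1 * c0 + a0 * c1)) (b0 ^ 2 - 4 * a0 * c0) := by
    simp only [κ, quart, map_add, map_sub, _root_.map_mul, map_pow, map_ofNat]
    ring
  have e2 : κ a1 b1 c1 ^ 2 - 4 * κ a2 b2 c2 * κ a0 b0 c0 =
      quart (a1 ^ 2 - 4 * a2 * a0) (2 * a1 * b1 - 4 * (a2 * b0 + b2 * a0))
        (b1 ^ 2 + 2 * a1 * c1 - 4 * (a2 * c0 + b2 * b0 + c2 * a0))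
        (2 * b1 * c1 - 4 * (b2 * c0 + c2 * b0)) (c1 ^ 2 - 4 * c2 * c0) := by
    simp only [κ, quart, map_add, map_sub, _root_.map_mul, map_pow, map_ofNat]
    ring
  have n1 := nsq hq hg
  have n2 := nsq hq' hf
  have s1 : SimEq g _ := SimEq.of_sq_mul hq
  have s2 : SimEq f _ := SimEq.of_sq_mul hq'
  rw [← h1, e1] at n1 s1
  rw [← h2, e2] at n2 s2
  have t1 := s1.trans (simEq_normal _ _ _ _ _ n1)
  have t2 := s2.trans (simEq_normal _ _ _ _ _ n2)
  -- The two discriminants have the same normal form because their invariants agree.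
  refine t2.trans ?_
  convert t1.symm using 3
  · simp only [invI]; ring
  · simp only [invJ]; ring

/-- The case where `j(K) ⊆ i(K)`. Both have index two in `L`, so they coincide, and `j = i ∘ σ` for an
automorphism `σ` of `K`. -/
lemma simEq_of_eq (i j : K →ₐ[ℂ] L) {f g : K} {u v : L} (hv : v ^ 2 = i g)
    (hu : u ^ 2 = j f) (hf : ¬ IsSquare f) (hg : ¬ IsSquare g)
    (hi : ∀ l : L, ∃ a b : K, l = i a + i b * v) (hj : ∀ l : L, ∃ a b : K, l = j a + j b * u)
    (hx : j RatFunc.X ∈ Set.range i) : SimEq f g := by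
  obtain ⟨h, hh⟩ := hx
  have hht : Transcendental ℂ h := fun h1 =>
    transcendental_map j (hh ▸ (isAlgebraic_algHom_iff i i.injective).2 h1)
  obtain ⟨s, hs⟩ := exists_subst h hht
  obtain rfl : j = i.comp s := ratFunc_algHom_ext (by simp [hs, hh])
  have i_inj : Function.Injective i := i.toRingHom.injective
  have s_inj : Function.Injective s := s.toRingHom.injective
  have hv' : v ∉ Set.range i := by
    rintro ⟨t, rfl⟩
    exact hg ⟨t, i_inj (by rw [← hv, _root_.map_mul, sq])⟩
  -- If `k` were not in `s(K)`, then `u`, and with it all of `L`, would lie in `i(K)`.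
  have hsurj : Function.Surjective s := by
    intro k
    obtain ⟨a, b, hab⟩ := hj (i k)
    by_cases hb : b = 0
    · subst hb
      exact ⟨a, i_inj (by simpa using hab.symm)⟩
    · have hb' : i (s b) ≠ 0 := by simpa using hb
      have hu' : u = i ((k - s a) / s b) := by
        rw [map_div₀, map_sub]
        field_simp
        simp only [AlgHom.comp_apply] at hab
        linear_combination -hab
      obtain ⟨a', b', hab'⟩ := hj v
      exact (hv' ⟨s a' + s b' * ((k - s a) / s b), by
        rw [map_add, _root_.map_mul, ← hu', hab']; rfl⟩).elim
  let σ : K ≃ₐ[ℂ] K := AlgEquiv.ofBijective s ⟨s_inj, hsurj⟩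
  have hσ : ∀ k, σ k = s k := fun k => rfl
  have hu2 : u ^ 2 = i (s f) := hu
  have hσf : ¬ IsSquare (s f) := by
    rintro ⟨t, ht⟩
    obtain ⟨t, rfl⟩ := hsurj t
    exact hf ⟨t, s_inj (by rw [ht, _root_.map_mul])⟩
  obtain ⟨p, q, rfl⟩ := hi u
  -- The square of `u = p + q v` lies in `i(K)`, so its `v`-component `2 p q` vanishes.
  have hpq : p * q = 0 := by
    by_contra hpq
    apply hv'
    have h2 : i (2 * p * q) ≠ 0 := by
      rw [_root_.map_ne_zero, mul_assoc]
      exact mul_ne_zero two_ne_zero hpq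
    refine ⟨(s f - p ^ 2 - q ^ 2 * g) / (2 * p * q), ?_⟩
    rw [map_div₀, div_eq_iff h2]
    simp only [map_sub, _root_.map_mul, map_pow, map_ofNat, ← hu2, ← hv]
    ring
  rcases mul_eq_zero.1 hpq with rfl | rfl
  · have h3 : s f = q ^ 2 * g := i_inj (by
      rw [← hu2, _root_.map_mul, map_pow, ← hv, map_zero]; ring)
    have hq : q ≠ 0 := by
      rintro rfl
      exact hσf (by simp [h3])
    have h4 := SimEq.of_aut (f := f) (inv_ne_zero hq) σ
    rw [hσ, h3] at h4
    convert h4 using 1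
    field_simp
  · exact (hσf ⟨p, i_inj (by rw [← hu2, _root_.map_mul, map_zero]; ring)⟩).elim

/-- If `L` is a quadratic extension of `K` through both `i` and `j`, adjoining a square root of `g` in
the first case and of `f` in the second, then `f` and `g` are equivalent. -/
lemma simEq_of_two_quadratic (i j : K →ₐ[ℂ] L) {f g : K} {u v : L} (hv : v ^ 2 = i g)
    (hu : u ^ 2 = j f) (hf : ¬ IsSquare f) (hg : ¬ IsSquare g)
    (hi : ∀ l : L, ∃ a b : K, l = i a + i b * v) (hj : ∀ l : L, ∃ a b : K, l = j a + j b * u) :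
    SimEq f g := by
  by_cases hx : j RatFunc.X ∈ Set.range i
  · exact simEq_of_eq i j hv hu hf hg hi hj hx
  by_cases hz : i RatFunc.X ∈ Set.range j
  · exact (simEq_of_eq j i hu hv hg hf hj hi hz).symm
  · exact simEq_of_ne i j hv hu hf hg hi hj hx hz

end Quadratic

/-! ### The fields `K[X]/(X² - f)` -/

lemma adjoinRoot_span (g : K) (l : AdjoinRoot (X ^ 2 - C g)) :
    ∃ a b : K, l = AdjoinRoot.of _ a + AdjoinRoot.of _ b * AdjoinRoot.root _ := by
  obtain ⟨p, rfl⟩ := AdjoinRoot.mk_surjective l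
  have hm : (X ^ 2 - C g : K[X]).Monic := monic_X_pow_sub_C g two_ne_zero
  have hd : (p %ₘ (X ^ 2 - C g)).natDegree ≤ 1 := by
    have := natDegree_modByMonic_lt p hm (fun h => by
      have := congrArg natDegree h
      rw [natDegree_X_pow_sub_C] at this
      simp at this)
    rw [natDegree_X_pow_sub_C] at this
    omega
  obtain ⟨b, a, hab⟩ := exists_eq_X_add_C_of_natDegree_le_one hd
  refine ⟨a, b, ?_⟩
  conv_lhs => rw [← modByMonic_add_div p (X ^ 2 - C g), hab]
  simp [add_comm]

lemma adjoinRoot_sq (g : K) :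
    (AdjoinRoot.root (X ^ 2 - C g)) ^ 2 = AdjoinRoot.of (X ^ 2 - C g) g := by
  have := AdjoinRoot.eval₂_root (X ^ 2 - C g)
  simpa [sub_eq_zero] using this

lemma simEq_of_algEquiv {f g : K} (hf : ¬ IsSquare f) (hg : ¬ IsSquare g)
    (e : AdjoinRoot (X ^ 2 - C f) ≃ₐ[ℂ] AdjoinRoot (X ^ 2 - C g)) : SimEq f g := by
  have hirr : Irreducible (X ^ 2 - C g : K[X]) :=
    X_pow_sub_C_irreducible_of_prime Nat.prime_two fun b hb => hg ⟨b, by rw [← hb, sq]⟩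
  have := Fact.mk hirr
  let of' (h : K) : K →ₐ[ℂ] AdjoinRoot (X ^ 2 - C h) := Algebra.algHom ℂ K _
  refine simEq_of_two_quadratic (of' g) ((e : _ →ₐ[ℂ] _).comp (of' f)) (v := AdjoinRoot.root _)
    (u := e (AdjoinRoot.root _)) (adjoinRoot_sq g) ?_ hf hg (adjoinRoot_span g) ?_
  · rw [← map_pow, adjoinRoot_sq]; rfl
  · intro l
    obtain ⟨a, b, hab⟩ := adjoinRoot_span f (e.symm l)
    refine ⟨a, b, ?_⟩
    rw [← e.apply_symm_apply l, hab, map_add, _root_.map_mul]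
    rfl

/-- An automorphism `σ` of `K` with `g = λ² σ(f)` extends to an isomorphism mapping `√f` to
`λ⁻¹ √g`. -/
lemma algEquiv_of_simEq {f g : K} (hf : ¬ IsSquare f) (h : SimEq f g) :
    Nonempty (AdjoinRoot (X ^ 2 - C f) ≃ₐ[ℂ] AdjoinRoot (X ^ 2 - C g)) := by
  have hirr : Irreducible (X ^ 2 - C f : K[X]) :=
    X_pow_sub_C_irreducible_of_prime Nat.prime_two fun b hb => hf ⟨b, by rw [← hb, sq]⟩
  have := Fact.mk hirr
  obtain ⟨lam, σ, hg⟩ := h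
  let i : K →ₐ[ℂ] AdjoinRoot (X ^ 2 - C g) := Algebra.algHom ℂ K _
  have hsq : (AdjoinRoot.root (X ^ 2 - C g)) ^ 2 = i g := adjoinRoot_sq g
  have hig : i g = i lam ^ 2 * i (σ f) := by
    rw [← map_pow, ← _root_.map_mul]
    exact congrArg i hg
  have hlam : i (lam⁻¹ : Kˣ) * i lam = 1 := by rw [← _root_.map_mul]; simp
  have hev : (X ^ 2 - C f : K[X]).eval₂ ((i.comp (σ : K →ₐ[ℂ] K)).toRingHom)
      (i (lam⁻¹ : Kˣ) * AdjoinRoot.root _) = 0 := by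
    simp only [eval₂_sub, eval₂_pow, eval₂_X, eval₂_C]
    change (i (lam⁻¹ : Kˣ) * AdjoinRoot.root _) ^ 2 - i (σ f) = 0
    rw [mul_pow, hsq, hig]
    linear_combination (i (lam⁻¹ : Kˣ) * i lam + 1) * i (σ f) * hlam
  let φ : AdjoinRoot (X ^ 2 - C f) →ₐ[ℂ] AdjoinRoot (X ^ 2 - C g) :=
    AdjoinRoot.liftAlgHom _ (i.comp (σ : K →ₐ[ℂ] K)) (i (lam⁻¹ : Kˣ) * AdjoinRoot.root _) hev
  have hφo (k : K) : φ (AdjoinRoot.of _ k) = i (σ k) := AdjoinRoot.lift_of hev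
  have hφr : φ (AdjoinRoot.root _) = i (lam⁻¹ : Kˣ) * AdjoinRoot.root _ := AdjoinRoot.lift_root hev
  have : Nontrivial (AdjoinRoot (X ^ 2 - C g)) :=
    AdjoinRoot.nontrivial _ (by rw [degree_X_pow_sub_C two_pos]; norm_num)
  refine ⟨AlgEquiv.ofBijective φ ⟨φ.toRingHom.injective, fun l => ?_⟩⟩
  obtain ⟨a, b, rfl⟩ := adjoinRoot_span g l
  refine ⟨AdjoinRoot.of _ (σ.symm a) + AdjoinRoot.of _ (σ.symm (b * lam)) * AdjoinRoot.root _, ?_⟩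
  rw [map_add, _root_.map_mul, hφo, hφo, hφr, σ.apply_symm_apply, σ.apply_symm_apply,
    _root_.map_mul]
  change i a + _ = i a + i b * _
  linear_combination i b * AdjoinRoot.root _ * hlam

/-! ### Conjugacy in the Jonquières group -/

lemma glAut_coe (σ : K ≃ₐ[ℂ] K) (M : GL2K) :
    ((glAut σ M : GL2K) : Matrix (Fin 2) (Fin 2) K) = (M : Matrix (Fin 2) (Fin 2) K).map σ := rfl

lemma JAct_pglK (σ : K ≃ₐ[ℂ] K) (M : GL2K) : JAct σ (pglK M) = pglK (glAut σ M) := rfl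

lemma conj_inl_s13 (m : PGL2K) (σ : K ≃ₐ[ℂ] K) (x : PGL2K) :
    (⟨m, σ⟩ : J) * SemidirectProduct.inl x * (⟨m, σ⟩ : J)⁻¹ =
      SemidirectProduct.inl (m * JAct σ x * m⁻¹) := by
  ext <;> simp [mul_assoc]

lemma exists_smul_of_pglK_eq {M N : GL2K} (h : pglK M = pglK N) : ∃ c : K, c ≠ 0 ∧
    (N : Matrix (Fin 2) (Fin 2) K) = c • (M : Matrix (Fin 2) (Fin 2) K) := by
  obtain ⟨z, hz, hzN⟩ := (QuotientGroup.mk'_eq_mk' _).1 h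
  obtain ⟨c, hc⟩ := Matrix.GeneralLinearGroup.mem_center_iff_val_mem_range_scalar.1 hz
  refine ⟨c, ?_, ?_⟩
  · rintro rfl
    exact z.ne_zero (by rw [← hc]; simp)
  · rw [← hzN, Units.val_mul, ← hc]
    ext a b
    simp [mul_comm]

/-- The class of `((0, f), (1, 0))` in `T_f` has a conjugate in `T_g`. Up to a scalar, a lift of it
keeps trace zero and the determinant `-σ(f)`. -/
lemma simEq_of_conj {f g : K} (hf : ¬ IsSquare f) (j : J)
    (h : (fun x => j * x * j⁻¹) '' (SemidirectProduct.inl '' Tset f)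
      = SemidirectProduct.inl '' Tset g) : SimEq f g := by
  obtain ⟨m, σ⟩ := j
  obtain ⟨M, rfl⟩ := QuotientGroup.mk_surjective m
  have hf0 : f ≠ 0 := by
    rintro rfl
    exact hf (IsSquare.zero)
  let N₀ : GL2K := Matrix.GeneralLinearGroup.mkOfDetNeZero !![0, f; 1, 0] (by simp [hf0])
  have hN₀ : pglK N₀ ∈ Tset f := ⟨N₀, 0, 1, by simp, by simp [N₀], rfl⟩
  have hmem := h.le ⟨_, ⟨_, hN₀, rfl⟩, rfl⟩
  simp only [conj_inl_s13] at hmem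
  obtain ⟨x, ⟨N, a, b, -, hN, rfl⟩, hx⟩ := hmem
  have hx' : pglK (M * glAut σ N₀ * M⁻¹) = pglK N := (SemidirectProduct.inl_injective hx).symm
  obtain ⟨c, hc, hcN⟩ := exists_smul_of_pglK_eq hx'
  have hN₁ : ((glAut σ N₀ : GL2K) : Matrix (Fin 2) (Fin 2) K) = !![0, σ f; 1, 0] := by
    rw [glAut_coe]
    ext a b
    fin_cases a <;> fin_cases b <;> simp [N₀]
  have htr := congrArg Matrix.trace hcN
  have hdet := congrArg Matrix.det hcN
  rw [Units.val_mul, Units.val_mul, Matrix.trace_smul, Matrix.trace_mul_cycle, Units.inv_mul,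
    Matrix.one_mul, hN₁, hN, Matrix.trace_fin_two_of, Matrix.trace_fin_two_of] at htr
  have hMM : (M : Matrix (Fin 2) (Fin 2) K).det * ((M⁻¹ : GL2K) : Matrix (Fin 2) (Fin 2) K).det
      = 1 := by
    rw [← Matrix.det_mul, Units.mul_inv, Matrix.det_one]
  rw [Units.val_mul, Units.val_mul, Matrix.det_smul, Matrix.det_mul, Matrix.det_mul, hN₁, hN,
    Matrix.det_fin_two_of, Matrix.det_fin_two_of, Fintype.card_fin] at hdet
  have ha : a = 0 := by
    have : (2 : K) * a = 0 := by linear_combination htr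
    simpa using this
  subst ha
  have h1 : b ^ 2 * g = c ^ 2 * σ f := by
    linear_combination -hdet + c ^ 2 * σ f * hMM
  have hb : b ≠ 0 := by
    rintro rfl
    have : c ^ 2 * σ f ≠ 0 := mul_ne_zero (pow_ne_zero 2 hc) (by simpa using hf0)
    exact this (by rw [← h1]; ring)
  have h2 := SimEq.of_aut (f := f) (div_ne_zero hc hb) σ
  convert h2 using 1
  field_simp
  linear_combination h1

/-- The element `(diag(λ, 1), σ)` of `J` conjugates `T_f` into `T_g`, and its inverse `T_g` into
`T_f`. -/
lemma conj_of_simEq {f g : K} (h : SimEq f g) :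
    ∃ j : J, (fun x => j * x * j⁻¹) '' (SemidirectProduct.inl '' Tset f)
      = SemidirectProduct.inl '' Tset g := by
  obtain ⟨lam, σ, hg⟩ := h
  let D : GL2K := ⟨!![(lam : K), 0; 0, 1], !![((lam⁻¹ : Kˣ) : K), 0; 0, 1],
    by simp [Matrix.one_fin_two], by simp [Matrix.one_fin_two]⟩
  refine ⟨⟨pglK D, σ⟩, Set.Subset.antisymm ?_ ?_⟩
  · rintro _ ⟨_, ⟨_, ⟨M, a, b, hab, hM, rfl⟩, rfl⟩, rfl⟩
    simp only [conj_inl_s13]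
    refine ⟨_, ⟨D * glAut σ M * D⁻¹, σ a, (lam⁻¹ : Kˣ) * σ b, by simpa using hab, ?_, rfl⟩, rfl⟩
    rw [Units.val_mul, Units.val_mul, glAut_coe, hM]
    change !![(lam : K), 0; 0, 1] * _ * !![((lam⁻¹ : Kˣ) : K), 0; 0, 1] = _
    have hσ : (!![a, b * f; b, a]).map σ = !![σ a, σ b * σ f; σ b, σ a] := by
      ext i j
      fin_cases i <;> fin_cases j <;> simp
    rw [hσ, hg, Matrix.mul_fin_two, Matrix.mul_fin_two]
    ext i j
    fin_cases i <;> fin_cases j <;> simp <;> field_simp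
  · rintro _ ⟨_, ⟨N, a, b, hab, hN, rfl⟩, rfl⟩
    have hM : ((glAut σ.symm (D⁻¹ * N * D) : GL2K) : Matrix (Fin 2) (Fin 2) K) =
        !![σ.symm a, σ.symm (lam * b) * f; σ.symm (lam * b), σ.symm a] := by
      rw [glAut_coe, Units.val_mul, Units.val_mul, hN]
      change (!![((lam⁻¹ : Kˣ) : K), 0; 0, 1] * _ * !![(lam : K), 0; 0, 1]).map _ = _
      have hσ : !![((lam⁻¹ : Kˣ) : K), 0; 0, 1] * !![a, b * g; b, a] * !![(lam : K), 0; 0, 1] =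
          !![a, lam * b * σ f; lam * b, a] := by
        rw [hg, Matrix.mul_fin_two, Matrix.mul_fin_two]
        ext i j
        fin_cases i <;> fin_cases j <;> simp <;> field_simp
      rw [hσ]
      ext i j
      fin_cases i <;> fin_cases j <;> simp
    refine ⟨_, ⟨pglK (glAut σ.symm (D⁻¹ * N * D)), ⟨_, _, _, ?_, hM, rfl⟩, rfl⟩, ?_⟩
    · simpa using hab
    · simp only [conj_inl_s13]
      have h3 : glAut σ (glAut σ.symm (D⁻¹ * N * D)) = D⁻¹ * N * D := by
        refine Units.ext ?_
        ext a b
        exact σ.apply_symm_apply _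
      rw [JAct_pglK, h3, ← map_inv, ← _root_.map_mul, ← _root_.map_mul]
      congr 2
      group

/-- Let `f, g ∈ ℂ(y)` be nonsquares. The following are equivalent: (1) `T_f` and `T_g`
(viewed inside the PGL₂(K)-factor of J) are conjugate in J; (2) there are `λ ∈ Kˣ` and
`σ ∈ Aut_ℂ(K)` with `g = λ²·σ(f)`; (3) the fields `K[X]/(X²−f)` and `K[X]/(X²−g)` are
isomorphic as ℂ-algebras. -/
theorem stmt13 (f g : K) (hf : ¬ IsSquare f) (hg : ¬ IsSquare g) :
    List.TFAE [
      ∃ j : J, (fun x => j * x * j⁻¹) '' (SemidirectProduct.inl '' Tset f)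
          = SemidirectProduct.inl '' Tset g,
      ∃ (lam : Kˣ) (σ : K ≃ₐ[ℂ] K), g = (lam : K) ^ 2 * σ f,
      Nonempty (AdjoinRoot (X ^ 2 - C f) ≃ₐ[ℂ] AdjoinRoot (X ^ 2 - C g)) ] := by
  tfae_have 1 → 2 := fun ⟨j, hj⟩ => simEq_of_conj hf j hj
  tfae_have 2 → 1 := conj_of_simEq
  tfae_have 2 → 3 := algEquiv_of_simEq hf
  tfae_have 3 → 2 := fun ⟨e⟩ => simEq_of_algEquiv hf hg e
  tfae_finish

end
end

section
/- Let K = ℂ(y) be the field of rational functions in one variable over ℂ and let f ∈ K be a nonsquare element. Then the group T_f ⊆ PGL₂(K) is isomorphic, as an abstract group, to the direct product of a cyclic group of order 2 and a free abelian group whose rank is the cardinality of ℂ; concretely, T_f ≅ ℤ/2ℤ × ⊕_{c ∈ ℂ} ℤ (the second factor being the group of finitely supported functions ℂ → ℤ under addition). -/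
/-!
The matrices `((a, bf), (b, a))` represent multiplication by `a + b√f` on the quadratic extension
`L = K(√f)`, so `T_f` is the image of `Lˣ` in `PGL₂(K)` and `T_f ≅ Lˣ / Kˣ`
(`toPGL_eq_one_iff`, `coe_range_toPGL`).

Let `σ` be the conjugation of `L / K`. A nonsquare `f` has odd order at some point of `ℂ`, and
moving that point to infinity reduces to the case where the degree of `f` is odd
(`exists_ringHom_odd`). Let `R` be the integral closure of `ℂ[X]` in `L`, a Dedekind domain, and
send `z ∈ Lˣ` to the divisor of `z / σ(z)` on `R`. This kills `Kˣ`, and if the divisor is trivial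
then `z / σ(z)` is a unit of `R` of norm one; as infinity is a branch point, a comparison of
parities of degrees shows that such a unit is `±1`, whence `z ∈ Kˣ ∪ √f Kˣ` (`exists_hom_of_odd`).
So `T_f` maps to a free abelian group with kernel of order two, generated by the class of `√f`.

Subgroups of free abelian groups are free (`finsupp_int_submodule_free`), so this extension splits.
The classes of `c + √f` for `c ∈ ℂ` show that `T_f` has cardinality `𝔠` (`mk_quotient`), and since
an uncountable free abelian group has rank equal to its cardinality, the free part has rank `𝔠`
(`nonempty_addEquiv_of_kernel`).
-/

open Matrix Polynomial

noncomputable section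

/-! ### The quadratic extension and `T_f` -/

/-- The quadratic extension `K(√f)`, with `⟨a, b⟩` standing for `a + b√f`. It is a field only when
`f` is not a square, which is supplied as a `Fact` where needed. -/
abbrev L (f : K) := QuadraticAlgebra K f 0

/-- `a + b√f ↦ ((a, bf), (b, a))`, the matrix of multiplication by `a + b√f` in the basis
`1, √f`. -/
def mulMatrix (f : K) : L f →* Matrix (Fin 2) (Fin 2) K where
  toFun z := !![z.re, z.im * f; z.im, z.re]
  map_one' := by
    ext i j
    fin_cases i <;> fin_cases j <;> simp [QuadraticAlgebra.re_one, QuadraticAlgebra.im_one]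
  map_mul' z w := by
    ext i j
    fin_cases i <;> fin_cases j <;>
      simp only [QuadraticAlgebra.re_mul, QuadraticAlgebra.im_mul, Matrix.mul_apply,
        Fin.sum_univ_two, Fin.zero_eta, Fin.mk_one, of_apply, cons_val_zero, cons_val_one,
        cons_val'] <;> ring

/-- The homomorphism `K(√f)ˣ → PGL₂(K)`; its kernel is `Kˣ`, and its range
is `T_f` when `f` is not a square. -/
def toPGL (f : K) : (L f)ˣ →* PGL2K := pglK.comp (Units.map (mulMatrix f))

/-- The form of nonsquareness from which the field structure on `K(√f)` is inferred. -/
theorem fact_of_not_isSquare {f : K} (hf : ¬ IsSquare f) : Fact (∀ r : K, r ^ 2 ≠ f + 0 * r) :=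
  ⟨fun r h => hf ⟨r, by rw [← sq, h]; ring⟩⟩

theorem toPGL_eq_one_iff {f : K} (z : (L f)ˣ) : toPGL f z = 1 ↔ z.1.im = 0 := by
  have : toPGL f z = 1 ↔ Units.map (mulMatrix f) z ∈ Subgroup.center GL2K :=
    QuotientGroup.eq_one_iff _
  rw [this, Matrix.GeneralLinearGroup.mem_center_iff_val_mem_range_scalar]
  constructor
  · rintro ⟨c, hc⟩
    have := congrFun (congrFun hc 1) 0
    simpa [mulMatrix] using this.symm
  · intro h
    refine ⟨z.1.re, ?_⟩
    ext i j
    fin_cases i <;> fin_cases j <;> simp [mulMatrix, h]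

theorem coe_range_toPGL {f : K} (hf : ¬ IsSquare f) :
    ((toPGL f).range : Set PGL2K) = Tset f := by
  have := fact_of_not_isSquare hf
  ext x
  constructor
  · rintro ⟨z, rfl⟩
    refine ⟨Units.map (mulMatrix f) z, z.1.re, z.1.im, ?_, rfl, rfl⟩
    rintro ⟨h1, h2⟩
    exact z.ne_zero (QuadraticAlgebra.ext h1 h2)
  · rintro ⟨M, a, b, hab, hM, rfl⟩
    have hz : (⟨a, b⟩ : L f) ≠ 0 := fun h =>
      hab ⟨congrArg QuadraticAlgebra.re h, congrArg QuadraticAlgebra.im h⟩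
    exact ⟨Units.mk0 _ hz, congrArg pglK (Units.ext hM.symm)⟩

/-! ### The divisor of `z / σ(z)` -/

/-- When `f` has odd degree, the map sending `z` to the divisor of `z / σ(z)` on the integral
closure `R` of `ℂ[X]` in `K(√f)` has kernel `Kˣ ∪ √f Kˣ`. The parity forces the units of norm one
in `R` to be `±1`: if `a² - f b² = 1` with `a` a polynomial and `b ≠ 0`, then `f b²` has odd degree
whereas `a² - 1` has even degree. -/
theorem exists_hom_of_odd {f : K} (hodd : Odd f.intDegree) :
    ∃ (ι : Type) (ψ : (L f)ˣ →* Multiplicative (ι →₀ ℤ)),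
      ∀ z, ψ z = 1 ↔ z.1.re = 0 ∨ z.1.im = 0 := by
  have hns : ¬ IsSquare f := by
    rintro ⟨g, rfl⟩
    by_cases hg : g = 0
    · simp [hg] at hodd
    · rw [RatFunc.intDegree_mul hg hg] at hodd
      exact absurd hodd (by simp)
  have hf0 : f ≠ 0 := by rintro rfl; simp at hodd
  have := fact_of_not_isSquare hns
  let R := integralClosure ℂ[X] (L f)
  have : Algebra.IsAlgebraic K (L f) := inferInstance
  have : IsDedekindDomain R := integralClosure.isDedekindDomain ℂ[X] K (L f)
  have : IsFractionRing R (L f) := integralClosure.isFractionRing_of_finite_extension K (L f)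
  -- `σ` is the conjugation `√f ↦ -√f`, and `θ z = z / σ z`
  let σ : (L f)ˣ →* (L f)ˣ := Units.map (starRingEnd (L f) : L f →* L f)
  have hσ (z : (L f)ˣ) : (σ z).1 = star z.1 := rfl
  let θ : (L f)ˣ →* (L f)ˣ := MonoidHom.id _ / σ
  have hθ (z : (L f)ˣ) : θ z = z / σ z := rfl
  let ι := IsDedekindDomain.HeightOneSpectrum R
  have hval (v : ι) (z : (L f)ˣ) : v.valuationOfNeZero z = 1 ↔ v.valuation (L f) z.1 = 1 := by
    rw [← IsDedekindDomain.HeightOneSpectrum.valuationOfNeZero_eq, ← WithZero.coe_one,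
      WithZero.coe_inj]
  have hfin (z : (L f)ˣ) : (Function.support fun v : ι => (v.valuationOfNeZero z).toAdd).Finite := by
    refine ((IsDedekindDomain.HeightOneSpectrum.Support.finite R z.1).union
      (IsDedekindDomain.HeightOneSpectrum.Support.finite R z⁻¹.1)).subset fun v hv => ?_
    have hv' : v.valuation (L f) z.1 ≠ 1 := fun h =>
      hv (congrArg Multiplicative.toAdd ((hval v z).2 h))
    rcases hv'.lt_or_gt with h | h
    · refine Or.inr ?_
      change 1 < v.valuation (L f) z⁻¹.1
      rw [Units.val_inv_eq_inv_val, map_inv₀]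
      exact (one_lt_inv₀ (zero_lt_iff.2 ((Valuation.ne_zero_iff _).2 z.ne_zero))).2 h
    · exact Or.inl h
  let D : (L f)ˣ →* Multiplicative (ι →₀ ℤ) :=
    { toFun z := .ofAdd (Finsupp.ofSupportFinite (fun v => (v.valuationOfNeZero z).toAdd) (hfin z))
      map_one' := by
        rw [← ofAdd_zero]
        refine congrArg _ (Finsupp.ext fun v => ?_)
        change (v.valuationOfNeZero (1 : (L f)ˣ)).toAdd = 0
        rw [map_one, toAdd_one]
      map_mul' z w := by
        rw [← ofAdd_add]
        refine congrArg _ (Finsupp.ext fun v => ?_)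
        change (v.valuationOfNeZero (z * w)).toAdd = _ + _
        rw [map_mul, toAdd_mul]
        rfl }
  have hD (z : (L f)ˣ) (h : D z = 1) (v : ι) : v.valuationOfNeZero z = 1 :=
    Multiplicative.toAdd.injective (DFunLike.congr_fun (congrArg Multiplicative.toAdd h) v)
  -- an element with trivial divisor lies in `R`
  have hDint (z : (L f)ˣ) (h : D z = 1) : IsIntegral ℂ[X] z.1 := by
    obtain ⟨r, hr⟩ := IsDedekindDomain.HeightOneSpectrum.mem_integers_of_valuation_le_one (R := R)
      (L f) z.1 fun v => ((hval v z).1 (hD z h v)).le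
    rw [← hr]
    exact r.2
  have hint (w : (L f)ˣ) (hw : D w = 1) (hnorm : w.1 * star w.1 = 1) : w = 1 ∨ w = -1 := by
    have hstar : star w.1 = w⁻¹.1 := by
      rw [Units.val_inv_eq_inv_val]; exact eq_inv_of_mul_eq_one_right hnorm
    have h1 : IsIntegral ℂ[X] (star w.1) := by
      rw [hstar]; exact hDint _ (by rw [map_inv, hw, inv_one])
    -- only the trace `2a` is known to be integral at first, but `2` is invertible in `ℂ[X]`
    have h2 : IsIntegral ℂ[X] (algebraMap K (L f) (2 * w.1.re)) := by
      have : algebraMap K (L f) (2 * w.1.re) = w.1 + star w.1 := by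
        ext <;> simp [two_mul]
      rw [this]
      exact (hDint w hw).add h1
    rw [isIntegral_algebraMap_iff (algebraMap K (L f)).injective,
      IsIntegrallyClosed.isIntegral_iff] at h2
    obtain ⟨p, hp⟩ := h2
    have hre : w.1.re * w.1.re - f * (w.1.im * w.1.im) = 1 := by
      have := congrArg QuadraticAlgebra.re hnorm
      simp [QuadraticAlgebra.re_one] at this
      linear_combination this
    have him : w.1.im = 0 := by
      by_contra him
      have hq : f * (w.1.im * w.1.im) = algebraMap ℂ[X] K ((C (1/2) * p) ^ 2 - C 1) := by
        have hc : algebraMap ℂ[X] K (C (1/2)) * 2 = 1 := by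
          rw [← map_ofNat (algebraMap ℂ[X] K) 2, ← map_mul, ← map_ofNat C 2, ← C_mul]
          norm_num
        have : algebraMap ℂ[X] K (C (1/2) * p) = w.1.re := by
          rw [map_mul, hp]; linear_combination w.1.re * hc
        rw [map_sub, map_pow, this, C_1, map_one]
        linear_combination -hre
      have := congrArg RatFunc.intDegree hq
      rw [RatFunc.intDegree_mul hf0 (mul_ne_zero him him), RatFunc.intDegree_mul him him,
        RatFunc.intDegree_polynomial, natDegree_sub_C, natDegree_pow] at this
      obtain ⟨k, hk⟩ := hodd
      push_cast at this
      omega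
    rw [him, mul_zero, mul_zero, sub_zero, mul_self_eq_one_iff] at hre
    refine hre.imp (fun h => ?_) fun h => ?_ <;> ext <;>
      simp [h, him, QuadraticAlgebra.re_one, QuadraticAlgebra.im_one]
  refine ⟨ι, D.comp θ, fun z => ?_⟩
  constructor
  · intro h
    have hn : (θ z).1 * star (θ z).1 = 1 := by
      have h0 : star z.1 ≠ 0 := (σ z).ne_zero
      have h1 := z.ne_zero
      have : (θ z).1 = z.1 / star z.1 := by
        rw [hθ, Units.val_div_eq_div_val, hσ]
      rw [this, star_div₀, star_star, div_mul_div_comm, mul_comm, div_self (mul_ne_zero h0 h1)]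
    rcases hint _ h hn with h | h
    · right
      have h' : z = σ z := div_eq_one.1 h
      have := congrArg (fun u : (L f)ˣ => u.1.im) h'
      simp only [hσ, QuadraticAlgebra.im_star] at this
      exact self_eq_neg.1 this
    · left
      have h' : z = - σ z := by 
        rw [hθ, div_eq_iff_eq_mul, neg_one_mul] at h; exact h
      have := congrArg (fun u : (L f)ˣ => u.1.re) h'
      simp only [Units.val_neg, hσ, QuadraticAlgebra.re_star, QuadraticAlgebra.re_neg] at this
      exact self_eq_neg.1 (by simpa using this)
  · -- `-1` is torsion and the target is torsion-free
    have hneg : D (-1) = 1 := by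
      have h2 : D (-1) * D (-1) = 1 := by rw [← map_mul]; simp
      have h3 : (D (-1)).toAdd + (D (-1)).toAdd = 0 := congrArg Multiplicative.toAdd h2
      refine Multiplicative.toAdd.injective (Finsupp.ext fun v => ?_)
      have h4 := DFunLike.congr_fun h3 v
      simp only [Finsupp.add_apply, Finsupp.zero_apply] at h4
      rw [toAdd_one, Finsupp.zero_apply]
      omega
    rintro (h | h)
    · have : θ z = -1 := by
        rw [hθ, div_eq_iff_eq_mul, neg_one_mul]
        ext <;> simp [hσ, h]
      rw [MonoidHom.comp_apply, this, hneg]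
    · have : θ z = 1 := by
        rw [hθ, div_eq_one]
        ext <;> simp [hσ, h]
      rw [MonoidHom.comp_apply, this, map_one]

/-! ### Free abelian groups -/

/-- A subgroup of a free abelian group is free, of arbitrary rank. After well-ordering `ι`, the
`i`-th coordinates of the elements of `N` supported in `(-∞, i]` form an ideal `(d i)`; elements
`n i` realizing `d i`, for those `i` with `d i ≠ 0`, form a basis. -/
theorem finsupp_int_submodule_free {ι : Type*} (N : Submodule ℤ (ι →₀ ℤ)) :
    Module.Free ℤ N := by
  classical
  obtain ⟨_, _⟩ := exists_wellFoundedLT ι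
  let F (i : ι) : Submodule ℤ (ι →₀ ℤ) := ⨅ j : {j // i < j}, LinearMap.ker (Finsupp.lapply j.1)
  have memF (i : ι) (x : ι →₀ ℤ) : x ∈ F i ↔ ∀ j, i < j → x j = 0 := by
    simp [F]
  let P (i : ι) : Submodule ℤ ℤ := (N ⊓ F i).map (Finsupp.lapply i)
  have hP (i : ι) : ∃ d, P i = Submodule.span ℤ {d} := (IsPrincipalIdealRing.principal (P i)).principal
  choose d hd using hP
  have hn (i : ι) : ∃ x ∈ N, (∀ j, i < j → x j = 0) ∧ x i = d i := by
    have : d i ∈ P i := by rw [hd]; exact Submodule.mem_span_singleton_self _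
    obtain ⟨x, ⟨hx, hxF⟩, hxi⟩ := this
    exact ⟨x, hx, (memF i x).1 hxF, hxi⟩
  choose n hnN hn0 hnd using hn
  let v : {i // d i ≠ 0} → N := fun i => ⟨n i, hnN i⟩
  -- independence: look at the largest index occurring in a relation
  have hli : LinearIndependent ℤ v := by
    rw [linearIndependent_iff]
    intro l hl
    by_contra hne
    have hs : l.support.Nonempty := Finsupp.support_nonempty_iff.2 hne
    set j := l.support.max' hs with hj
    have hjm : j ∈ l.support := Finset.max'_mem _ _
    have h1 : (Finsupp.linearCombination ℤ v l : N).1 j.1 = 0 := by rw [hl]; rfl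
    rw [Finsupp.linearCombination_apply, Finsupp.sum, Submodule.coe_sum, Finsupp.finsetSum_apply,
      Finset.sum_eq_single j] at h1
    · simp only [Submodule.coe_smul, Finsupp.smul_apply, smul_eq_mul, mul_eq_zero, v, hnd] at h1
      exact h1.elim (Finsupp.mem_support_iff.1 hjm) j.2
    · intro i hi hij
      have : i < j := lt_of_le_of_ne (Finset.le_max' _ _ hi) hij
      simp [v, hn0 i.1 j.1 this]
    · intro h; exact absurd hjm h
  -- generation: cancel the top coordinate and descend along the well-order
  have key : ∀ i : ι, ∀ x : ι →₀ ℤ, ∀ hx : x ∈ N, (∀ j, i < j → x j = 0) →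
      (⟨x, hx⟩ : N) ∈ Submodule.span ℤ (Set.range v) := by
    intro i
    induction i using WellFoundedLT.induction with
    | ind i ih =>
      intro x hx hx0
      have hxi : x i ∈ P i := ⟨x, ⟨hx, (memF i x).2 hx0⟩, rfl⟩
      rw [hd, Submodule.mem_span_singleton] at hxi
      obtain ⟨c, hc⟩ := hxi
      have hyN : x - c • n i ∈ N := N.sub_mem hx (N.smul_mem _ (hnN i))
      have hmem : c • (⟨n i, hnN i⟩ : N) ∈ Submodule.span ℤ (Set.range v) := by
        by_cases hdi : d i = 0
        · -- here `n i` itself is supported strictly below `i`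
          by_cases hz : n i = 0
          · have : (⟨n i, hnN i⟩ : N) = 0 := Subtype.ext hz
            rw [this, smul_zero]; exact Submodule.zero_mem _
          · have hs := Finsupp.support_nonempty_iff.2 hz
            have hm := Finset.max'_mem _ hs
            refine Submodule.smul_mem _ _ (ih ((n i).support.max' hs) ?_ _ _ ?_)
            · by_contra hlt
              rcases (not_lt.1 hlt).eq_or_lt with h | h
              · rw [← h, Finsupp.mem_support_iff, hnd] at hm; exact hm hdi
              · exact (Finsupp.mem_support_iff.1 hm) (hn0 _ _ h)
            · intro j hj
              by_contra hne
              exact absurd (Finset.le_max' _ _ (Finsupp.mem_support_iff.2 hne)) (not_le.2 hj)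
        · exact Submodule.smul_mem _ _ (Submodule.subset_span ⟨⟨i, hdi⟩, rfl⟩)
      have hy : (⟨x - c • n i, hyN⟩ : N) ∈ Submodule.span ℤ (Set.range v) := by
        by_cases hz : x - c • n i = 0
        · have : (⟨x - c • n i, hyN⟩ : N) = 0 := Subtype.ext hz
          rw [this]; exact Submodule.zero_mem _
        · have hs := Finsupp.support_nonempty_iff.2 hz
          have hm := Finset.max'_mem _ hs
          refine ih ((x - c • n i).support.max' hs) ?_ _ _ ?_
          · by_contra hlt
            apply Finsupp.mem_support_iff.1 hm
            rcases (not_lt.1 hlt).eq_or_lt with h | h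
            · rw [← h]; simp [hnd, ← hc]
            · simp [hn0 _ _ h, hx0 _ h]
          · intro j hj
            by_contra hne
            exact absurd (Finset.le_max' _ _ (Finsupp.mem_support_iff.2 hne)) (not_le.2 hj)
      have := Submodule.add_mem _ hy hmem
      convert this using 1
      ext1
      simp
  refine Module.Free.of_basis (Module.Basis.mk hli ?_)
  rintro ⟨x, hx⟩ -
  by_cases hz : x = 0
  · subst hz; exact Submodule.zero_mem _
  · refine key (x.support.max' (Finsupp.support_nonempty_iff.2 hz)) x hx fun j hj => ?_
    by_contra hne
    exact absurd (Finset.le_max' _ _ (Finsupp.mem_support_iff.2 hne)) (not_le.2 hj)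

open Cardinal in
/-- An abelian group of cardinality `𝔠` admitting a homomorphism to a free abelian group with
kernel of order two is `ℤ/2ℤ × ⊕_ℂ ℤ`: the image is free, so the extension splits, and the rank of
the image equals its cardinality, being uncountable. -/
theorem nonempty_addEquiv_of_kernel {A ι : Type} [AddCommGroup A]
    (ψ : A →+ (ι →₀ ℤ)) (t : A) (ht : t ≠ 0) (ht2 : t + t = 0)
    (hker : ∀ a, ψ a = 0 ↔ a = 0 ∨ a = t) (hA : #A = 𝔠) :
    Nonempty (A ≃+ ZMod 2 × (ℂ →₀ ℤ)) := by
  let φ : A →ₗ[ℤ] (ι →₀ ℤ) := ψ.toIntLinearMap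
  let N := LinearMap.range φ
  have : Module.Free ℤ N := finsupp_int_submodule_free N
  obtain ⟨s, hs⟩ := Module.projective_lifting_property φ.rangeRestrict LinearMap.id
    φ.surjective_rangeRestrict
  have hs' (x : N) : φ (s x) = x := congrArg Subtype.val (LinearMap.congr_fun hs x)
  have htφ : φ t = 0 := (hker t).2 (Or.inr rfl)
  -- `s` is a section of `φ` over its image, `τ` the inclusion of the kernel
  let τ : ZMod 2 →+ A := ZMod.lift 2 ⟨zmultiplesHom A t, by simp [two_smul, ht2]⟩
  have hτ1 : τ 1 = t := by
    have := ZMod.lift_coe 2 ⟨zmultiplesHom A t, by simp [two_smul, ht2]⟩ 1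
    simpa using this
  let Θ : ZMod 2 × N →+ A := τ.coprod s.toAddMonoidHom
  have hτφ (e : ZMod 2) : φ (τ e) = 0 := by
    fin_cases e
    · exact (congrArg φ (map_zero τ)).trans (map_zero φ)
    · exact (congrArg φ hτ1).trans htφ
  have hΘ (p : ZMod 2 × N) : φ (Θ p) = p.2 := by
    have : Θ p = τ p.1 + s p.2 := rfl
    rw [this, map_add, hτφ, hs', zero_add]
  have hbij : Function.Bijective Θ := by
    constructor
    · rw [injective_iff_map_eq_zero]
      rintro ⟨e, x⟩ h
      have hx : x = 0 := by
        have := hΘ (e, x)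
        rw [h, map_zero] at this
        exact Subtype.ext this.symm
      subst hx
      have he : τ e = 0 := by
        have : Θ (e, 0) = τ e + s 0 := rfl
        rwa [this, map_zero, add_zero] at h
      fin_cases e
      · rfl
      · exact absurd (hτ1.symm.trans he) ht
    · intro a
      have : ψ (a - s (φ.rangeRestrict a)) = 0 := by
        change φ _ = 0
        rw [map_sub, hs']; exact sub_self _
      rcases (hker _).1 this with h | h
      · exact ⟨(0, φ.rangeRestrict a), by
          change τ 0 + s (φ.rangeRestrict a) = a
          rw [map_zero, zero_add, ← sub_eq_zero.1 h]⟩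
      · exact ⟨(1, φ.rangeRestrict a), by
          change τ 1 + s (φ.rangeRestrict a) = a
          rw [hτ1, ← h, sub_add_cancel]⟩
  let e : ZMod 2 × N ≃+ A := AddEquiv.ofBijective Θ hbij
  let b := Module.Free.chooseBasis ℤ N
  set J := Module.Free.ChooseBasisIndex ℤ N
  let e' : A ≃ ZMod 2 × (J →₀ ℤ) :=
    (e.symm.trans (AddEquiv.prodCongr (AddEquiv.refl _) b.repr.toAddEquiv)).toEquiv
  have hJinf : Infinite J := by
    by_contra hfin
    have : Finite J := not_infinite_iff_finite.1 hfin
    have : Countable A := e'.countable_iff.2 inferInstance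
    have h2 := mk_le_aleph0_iff.2 this
    rw [hA] at h2
    exact absurd h2 (not_le.2 aleph0_lt_continuum)
  have hJ : #J = #ℂ := by
    have h2 : #A = #(ZMod 2 × (J →₀ ℤ)) := mk_congr e'
    have h3 : #(ZMod 2) = 2 := by simp
    rw [hA, mk_prod, lift_id, lift_id, h3, mk_finsupp_of_infinite, mk_int,
      max_eq_left (aleph0_le_mk J), mul_eq_right (aleph0_le_mk J) ?_ two_ne_zero] at h2
    · rw [← h2, mk_complex]
    · exact (ofNat_lt_aleph0 (n := 2)).le.trans (aleph0_le_mk J)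
  obtain ⟨r⟩ := Cardinal.eq.1 hJ
  exact ⟨e.symm.trans (AddEquiv.prodCongr (AddEquiv.refl _) (b.repr.toAddEquiv.trans
    (Finsupp.domCongr r)))⟩

/-! ### Reduction to odd degree -/

theorem exists_odd_rootMultiplicity {p : ℂ[X]} (hp : ¬ IsSquare p) :
    ∃ c, Odd (p.rootMultiplicity c) := by
  by_contra! h
  apply hp
  rw [(IsAlgClosed.splits p).eq_prod_roots, Finset.prod_multiset_map_count]
  refine IsSquare.mul ?_ (Finset.isSquare_prod _ fun c _ => ?_)
  · exact (show IsSquare p.leadingCoeff from IsAlgClosed.exists_eq_mul_self _).map C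
  · rw [count_roots]
    exact (Nat.not_odd_iff_even.1 (h c)).isSquare_pow _

/-- The substitution `X ↦ X⁻¹ + c`, which exchanges the point `c` and the point at infinity. -/
def substHom (c : ℂ) : ℂ[X] →+* K := eval₂RingHom RatFunc.C (RatFunc.X⁻¹ + RatFunc.C c)

/-- Substituting `X⁻¹` into a polynomial gives its reverse divided by a power of `X`; here this is
applied to the translate `p(X + c)`. -/
theorem substHom_apply (c : ℂ) (p : ℂ[X]) :
    substHom c p * RatFunc.X ^ (p.comp (X + C c)).natDegree =
      algebraMap ℂ[X] K (p.comp (X + C c)).reverse := by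
  set q := p.comp (X + C c)
  have h1 : substHom c p = eval₂ RatFunc.C (RatFunc.X⁻¹ : K) q := by
    simp [substHom, q, eval₂_comp]
  let _ : Invertible (RatFunc.X⁻¹ : K) := invertibleOfNonzero (inv_ne_zero RatFunc.X_ne_zero)
  have h2 := eval₂_reverse_mul_pow (RatFunc.C : ℂ →+* K) (RatFunc.X⁻¹ : K) q
  have h3 (r : ℂ[X]) : eval₂ (RatFunc.C : ℂ →+* K) RatFunc.X r = algebraMap ℂ[X] K r := by
    have : eval₂RingHom (RatFunc.C : ℂ →+* K) RatFunc.X = algebraMap ℂ[X] K := by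
      ext <;> simp
    exact congrArg (fun g : ℂ[X] →+* K => g r) this
  rw [invOf_eq_inv, inv_inv, h3, ← h1] at h2
  rw [← h2, mul_assoc, ← mul_pow, inv_mul_cancel₀ RatFunc.X_ne_zero, one_pow, mul_one]

theorem comp_X_add_C_ne_zero {p : ℂ[X]} (hp : p ≠ 0) (c : ℂ) : p.comp (X + C c) ≠ 0 :=
  comp_X_add_C_ne_zero_iff.2 hp

theorem substHom_injective (c : ℂ) : Function.Injective (substHom c) := by
  rw [injective_iff_map_eq_zero]
  intro p hp
  by_contra h
  have h1 := substHom_apply c p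
  rw [hp, zero_mul, eq_comm, map_eq_zero_iff _ (IsFractionRing.injective ℂ[X] K),
    reverse_eq_zero] at h1
  exact comp_X_add_C_ne_zero h c h1

theorem intDegree_pow_X (n : ℕ) : (RatFunc.X ^ n : K).intDegree = n := by
  rw [← RatFunc.algebraMap_X, ← map_pow, RatFunc.intDegree_polynomial, natDegree_X_pow]

/-- The order of vanishing at `c` becomes minus the degree. -/
theorem intDegree_substHom {p : ℂ[X]} (hp : p ≠ 0) (c : ℂ) :
    (substHom c p).intDegree = -(p.rootMultiplicity c : ℤ) := by
  have h0 : substHom c p ≠ 0 := (map_ne_zero_iff _ (substHom_injective c)).2 hp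
  have h1 := congrArg RatFunc.intDegree (substHom_apply c p)
  rw [RatFunc.intDegree_mul h0 (pow_ne_zero _ RatFunc.X_ne_zero), RatFunc.intDegree_polynomial,
    reverse_natDegree, intDegree_pow_X, ← rootMultiplicity_eq_natTrailingDegree] at h1
  have h2 : p.rootMultiplicity c ≤ (p.comp (X + C c)).natDegree := by
    rw [rootMultiplicity_eq_natTrailingDegree]; exact natTrailingDegree_le_natDegree _
  omega

/-- A nonsquare has odd order at some `c ∈ ℂ`, and moving `c` to infinity makes its degree odd. -/
theorem exists_ringHom_odd {f : K} (hf : ¬ IsSquare f) :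
    ∃ σ : K →+* K, Odd (σ f).intDegree := by
  have hf0 : f ≠ 0 := by rintro rfl; exact hf (IsSquare.zero)
  have hd : algebraMap ℂ[X] K f.denom ≠ 0 := RatFunc.algebraMap_ne_zero f.denom_ne_zero
  -- modulo squares, `f` may be replaced by the polynomial `num * denom`
  have hfp : f * (algebraMap ℂ[X] K f.denom) ^ 2 = algebraMap ℂ[X] K (f.num * f.denom) := by
    nth_rewrite 1 [← RatFunc.num_div_denom f]
    rw [map_mul]; field_simp
  have hp0 : f.num * f.denom ≠ 0 := mul_ne_zero (RatFunc.num_ne_zero hf0) f.denom_ne_zero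
  have hp : ¬ IsSquare (f.num * f.denom) := by
    intro h
    have h2 := h.map (algebraMap ℂ[X] K)
    rw [← hfp] at h2
    apply hf
    rw [← mul_div_cancel_right₀ f (pow_ne_zero 2 hd)]
    exact h2.div (IsSquare.sq _)
  obtain ⟨c, hc⟩ := exists_odd_rootMultiplicity hp
  let σ : K →+* K := IsFractionRing.lift (substHom_injective c)
  have hσ (r : ℂ[X]) : σ (algebraMap ℂ[X] K r) = substHom c r := IsFractionRing.lift_algebraMap _ r
  refine ⟨σ, ?_⟩
  have h := congrArg (fun x => (σ x).intDegree) hfp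
  have hσd : σ (algebraMap ℂ[X] K f.denom) ≠ 0 := (map_ne_zero σ).2 hd
  simp only [map_mul σ, map_pow σ] at h
  rw [RatFunc.intDegree_mul ((map_ne_zero σ).2 hf0) (pow_ne_zero 2 hσd), sq,
    RatFunc.intDegree_mul hσd hσd, hσ (_ * _), intDegree_substHom hp0] at h
  obtain ⟨k, hk⟩ := hc
  rw [hk] at h
  refine ⟨-(k : ℤ) - 1 - (σ (algebraMap ℂ[X] K f.denom)).intDegree, ?_⟩
  push_cast at h
  linarith

/-- The map `K(√f) → K(√(σ f))` induced by an endomorphism `σ` of `K`. -/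
def quadMap (σ : K →+* K) (f : K) : L f →* L (σ f) where
  toFun z := ⟨σ z.re, σ z.im⟩
  map_one' := by ext <;> simp [QuadraticAlgebra.re_one, QuadraticAlgebra.im_one]
  map_mul' z w := by ext <;> simp

/-- `exists_hom_of_odd` for every nonsquare `f`, by transport along an endomorphism of `K` making
the degree odd. -/
theorem exists_hom {f : K} (hf : ¬ IsSquare f) :
    ∃ (ι : Type) (ψ : (L f)ˣ →* Multiplicative (ι →₀ ℤ)),
      ∀ z, ψ z = 1 ↔ z.1.re = 0 ∨ z.1.im = 0 := by
  obtain ⟨σ, hσ⟩ := exists_ringHom_odd hf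
  obtain ⟨ι, ψ, hψ⟩ := exists_hom_of_odd hσ
  refine ⟨ι, ψ.comp (Units.map (quadMap σ f)), fun z => ?_⟩
  rw [MonoidHom.comp_apply, hψ]
  exact or_congr (map_eq_zero σ) (map_eq_zero σ)

/-! ### Cardinality -/

open Cardinal in
theorem mk_K_le : #K ≤ 𝔠 := by
  refine (IsLocalization.cardinalMk_le (R := ℂ[X]) (nonZeroDivisors ℂ[X])).trans ?_
  refine Polynomial.cardinalMk_le_max.trans ?_
  rw [mk_complex]
  exact max_le le_rfl aleph0_le_continuum

open Cardinal in
/-- The lower bound holds because the elements `c + √f`, for `c ∈ ℂ`, are pairwise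
non-proportional over `K`. -/
theorem mk_quotient {f : K} (hf : ¬ IsSquare f) : #((L f)ˣ ⧸ (toPGL f).ker) = 𝔠 := by
  have := fact_of_not_isSquare hf
  apply le_antisymm
  · refine (mk_le_of_surjective (QuotientGroup.mk_surjective)).trans ?_
    refine (mk_le_of_injective (Units.val_injective (α := L f))).trans ?_
    rw [mk_congr (QuadraticAlgebra.equivProd f 0), mk_prod, lift_id]
    exact (mul_le_mul' mk_K_le mk_K_le).trans continuum_mul_self.le
  · rw [← mk_complex]
    have hne (c : ℂ) : (⟨RatFunc.C c, 1⟩ : L f) ≠ 0 := fun h =>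
      one_ne_zero (congrArg QuadraticAlgebra.im h)
    refine mk_le_of_injective
      (f := fun c : ℂ => ((Units.mk0 _ (hne c) : (L f)ˣ) : (L f)ˣ ⧸ (toPGL f).ker)) ?_
    intro c d h
    rw [QuotientGroup.eq, MonoidHom.mem_ker, toPGL_eq_one_iff] at h
    set u := (Units.mk0 _ (hne c))⁻¹ * Units.mk0 _ (hne d) with hu
    have h2 : Units.mk0 _ (hne c) * u = Units.mk0 _ (hne d) := by rw [hu, mul_inv_cancel_left]
    have hre := congrArg (fun u : (L f)ˣ => u.1.re) h2
    have him := congrArg (fun u : (L f)ˣ => u.1.im) h2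
    simp only [Units.val_mul, Units.val_mk0, QuadraticAlgebra.re_mul, QuadraticAlgebra.im_mul, h,
      mul_zero, one_mul, zero_mul, add_zero, zero_add] at hre him
    rw [him, mul_one] at hre
    exact RatFunc.C_injective hre

/-- For a nonsquare `f ∈ ℂ(y)`, the group `T_f ⊆ PGL₂(ℂ(y))` is abstractly isomorphic to
`ℤ/2ℤ × ⊕_{c ∈ ℂ} ℤ`. -/
theorem stmt16 (f : K) (hf : ¬ IsSquare f) :
    ∃ T : Subgroup PGL2K, (T : Set PGL2K) = Tset f ∧
      Nonempty (T ≃* Multiplicative (ZMod 2 × (ℂ →₀ ℤ))) := by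
  have := fact_of_not_isSquare hf
  have hf0 : f ≠ 0 := by rintro rfl; exact hf (IsSquare.zero)
  refine ⟨(toPGL f).range, coe_range_toPGL hf, ?_⟩
  obtain ⟨ι, ψ, hψ⟩ := exists_hom hf
  let Q := (L f)ˣ ⧸ (toPGL f).ker
  have hω : (⟨0, 1⟩ : L f) ≠ 0 := fun h => one_ne_zero (congrArg QuadraticAlgebra.im h)
  -- the class of `√f` is the element of order two
  let ω : (L f)ˣ := Units.mk0 _ hω
  have hQ (z : (L f)ˣ) : (z : Q) = 1 ↔ z.1.im = 0 := by
    rw [QuotientGroup.eq_one_iff, MonoidHom.mem_ker, toPGL_eq_one_iff]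
  let ψQ : Q →* Multiplicative (ι →₀ ℤ) := QuotientGroup.lift _ ψ fun z hz =>
    (hψ z).2 (Or.inr ((toPGL_eq_one_iff z).1 hz))
  have hker (q : Q) : ψQ q = 1 ↔ q = 1 ∨ q = (ω : Q) := by
    obtain ⟨z, rfl⟩ := QuotientGroup.mk_surjective q
    have h1 : (z : Q) = (ω : Q) ↔ z.1.re = 0 := by
      rw [← div_eq_one, ← QuotientGroup.mk_div, hQ]
      set u := z / ω with hu
      have h2 : u * ω = z := by rw [hu, div_mul_cancel]
      have hre := congrArg (fun u : (L f)ˣ => u.1.re) h2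
      simp only [Units.val_mul, ω, Units.val_mk0, QuadraticAlgebra.re_mul, mul_zero, mul_one,
        zero_add] at hre
      rw [← hre, mul_eq_zero, or_iff_right hf0]
    rw [hQ, h1, or_comm]
    exact hψ z
  have hω1 : (ω : Q) ≠ 1 := fun h => one_ne_zero ((hQ ω).1 h)
  have hω2 : (ω : Q) * ω = 1 := by
    rw [← QuotientGroup.mk_mul, hQ]
    simp [ω]
  obtain ⟨e⟩ := nonempty_addEquiv_of_kernel (A := Additive Q) (MonoidHom.toAdditiveLeft ψQ)
    (Additive.ofMul (ω : Q)) hω1 hω2 hker (mk_quotient hf)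
  exact ⟨(QuotientGroup.quotientKerEquivRange (toPGL f)).symm.trans
    (AddEquiv.toMultiplicativeRight e)⟩

end
end
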